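/- Let c₁ and c₂ each satisfy [H1] and [H2], and for j = 1, 2 suppose the Jost solutions U_{1,j}, U_{2,j} : ℝ × {Im k ≥ 0} → ℂ at each k depend holomorphically on k in {Im k > 0} and continuously on {Im k ≥ 0} (together with their x-derivatives). For each real k ≠ 0 let T_j(k) ≠ 0 and R₂(k; c_j) be the scattering coefficients of c_j, determined by U_{1,j}(·,k) = (R₂(k;c_j)/T_j(k)) U_{2,j}(·,k) + (1/T_j(k)) conj(U_{2,j}(·,k)). If R₂(k; c₁) = R₂(k; c₂) for all real k ≠ 0, then T₁(k) = T₂(k) for all real k ≠ 0; that is, the reflection coefficient uniquely determines the transmission coefficient. -/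

import Mathlib

open MeasureTheory Filter Topology

noncomputable section

/-- Hypothesis [H1]: `c` is essentially bounded below away from `0` and bounded above. -/
def HypH1 (c : ℝ → ℝ) : Prop :=
  ∃ c₀ > (0 : ℝ), ∃ cM > (0 : ℝ), ∀ᵐ x : ℝ, c₀ < c x ∧ c x ≤ cM

/-- Hypothesis [H1] with explicit constants `c₀`, `cM`. -/
def HypH1c (c : ℝ → ℝ) (c₀ cM : ℝ) : Prop :=
  0 < c₀ ∧ 0 < cM ∧ ∀ᵐ x : ℝ, c₀ < c x ∧ c x ≤ cM

/-- Hypothesis [H2]: `|c(x) - 1| ≤ C ⟨x⟩^{-1-δ}` almost everywhere. -/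
def HypH2 (c : ℝ → ℝ) : Prop :=
  ∃ C > (0 : ℝ), ∃ δ > (0 : ℝ),
    ∀ᵐ x : ℝ, |c x - 1| ≤ C * (1 + x ^ 2) ^ (-(1 + δ) / 2)

/-- `u` is continuously differentiable, its derivative is locally absolutely continuous,
and `u'' + (k²/c²) u = 0` holds almost everywhere (equivalently, the integral formulation
of the second-order equation holds). -/
def SolvesHelmholtz (c : ℝ → ℝ) (k : ℂ) (u : ℝ → ℂ) : Prop :=
  ContDiff ℝ 1 u ∧
  ∀ a b : ℝ, deriv u b = deriv u a + ∫ x in a..b, -(k ^ 2 / ((c x : ℂ) ^ 2)) * u x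

/-- The Jost solution from `+∞` at `k` : `e^{-ikx} u(x) → 1` as `x → +∞`. -/
def IsJostPlus (c : ℝ → ℝ) (k : ℂ) (u : ℝ → ℂ) : Prop :=
  SolvesHelmholtz c k u ∧
  Tendsto (fun x : ℝ => Complex.exp (-(Complex.I * k * (x : ℂ))) * u x) atTop (𝓝 1)

/-- The Jost solution from `-∞` at `k` : `e^{ikx} u(x) → 1` as `x → -∞`. -/
def IsJostMinus (c : ℝ → ℝ) (k : ℂ) (u : ℝ → ℂ) : Prop :=
  SolvesHelmholtz c k u ∧
  Tendsto (fun x : ℝ => Complex.exp (Complex.I * k * (x : ℂ)) * u x) atBot (𝓝 1)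

/-- `q = 1 - 1/c²`. -/
def qfun (c : ℝ → ℝ) (x : ℝ) : ℝ := 1 - 1 / (c x) ^ 2

/-- `Q = 1 - 1/c`. -/
def Qfun (c : ℝ → ℝ) (x : ℝ) : ℝ := 1 - 1 / c x

/-- Regularity in `k` of a family of solutions: holomorphy on the open upper half-plane
and continuity up to the real axis, for the solution and its `x`-derivative. -/
def JostFamilyRegular (U : ℂ → ℝ → ℂ) : Prop :=
  ∀ y : ℝ,
    DifferentiableOn ℂ (fun k => U k y) {k : ℂ | 0 < k.im} ∧
    ContinuousOn (fun k => U k y) {k : ℂ | 0 ≤ k.im} ∧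
    DifferentiableOn ℂ (fun k => deriv (U k) y) {k : ℂ | 0 < k.im} ∧
    ContinuousOn (fun k => deriv (U k) y) {k : ℂ | 0 ≤ k.im}

/-!
The Wronskian of the two Jost solutions of `c_j`, divided by `2ik`, is a function `F_j` on the
closed upper half-plane with `F_j(k) = 1 / T_j(k)` on the real line. It is of exponential type by
Volterra bounds on the Faddeev functions `e^{-ikx} u`, and so is `1 / F_j`: the Jost solutions carry
energy fluxes of opposite sign, and Grönwall's inequality bounds each of these from below at `x = 0`
by its value at infinity.

Equal reflection coefficients force `|T₁| = |T₂|` by conservation of energy, so `F₁ / F₂` is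
unimodular on the real line. Its Schwarz reflection is a zero-free entire function of exponential
type, hence equal to `exp (a + b k)`. At `k = 0` the quotient is `1`, and the low-energy expansion
`T = 1 + R + o(k)` makes its derivative vanish there, so the quotient is identically `1`.
-/

open scoped ComplexConjugate

section Entire

theorem exists_differentiable_exp_eq {g : ℂ → ℂ} (hg : Differentiable ℂ g) (hg₀ : ∀ z, g z ≠ 0) :
    ∃ L : ℂ → ℂ, Differentiable ℂ L ∧ ∀ z, g z = Complex.exp (L z) := by
  have hlog : Differentiable ℂ fun z ↦ deriv g z / g z := hg.deriv.div hg hg₀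
  obtain ⟨L, hL₀, hL⟩ := hlog.isExactOn_univ.with_val_at 0 (Complex.log (g 0))
  refine ⟨L, fun z ↦ (hL z trivial).differentiableAt, fun z ↦ ?_⟩
  have hquot (w : ℂ) : HasDerivAt (fun w ↦ g w * Complex.exp (-L w)) 0 w := by
    refine ((hg w).hasDerivAt.mul (hL w trivial).neg.cexp).congr_deriv ?_
    field_simp [hg₀ w]
    ring
  have hconst := is_const_of_deriv_eq_zero (fun w ↦ (hquot w).differentiableAt)
    (fun w ↦ (hquot w).deriv) z 0
  simp only [hL₀, Complex.exp_neg, Complex.exp_log (hg₀ 0), mul_inv_cancel₀ (hg₀ 0)] at hconst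
  exact (mul_inv_eq_one₀ (Complex.exp_ne_zero _)).1 hconst

theorem exists_norm_le_linear_of_re_le_linear {L : ℂ → ℂ} (hL : Differentiable ℂ L) {C : ℝ}
    (hre : ∀ z, (L z).re ≤ C * (1 + ‖z‖)) : ∃ A, ∀ z, ‖L z‖ ≤ A * (1 + ‖z‖) := by
  refine ⟨6 * (|C| + 1) + 3 * ‖L 0‖, fun z ↦ ?_⟩
  have hz := norm_nonneg z
  have hmaps : Set.MapsTo L (Metric.ball 0 (2 * ‖z‖ + 2))
      {w | w.re ≤ (|C| + 1) * (3 + 2 * ‖z‖)} := by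
    intro w hw
    rw [mem_ball_zero_iff] at hw
    exact (hre w).trans (mul_le_mul ((le_abs_self C).trans (by linarith)) (by linarith)
      (by positivity) (by positivity))
  have hborel := Complex.borelCaratheodory (by positivity) hL.differentiableOn hmaps
    (by positivity) (mem_ball_zero_iff.2 (by linarith : ‖z‖ < 2 * ‖z‖ + 2))
  calc ‖L z‖ ≤ 2 * ((|C| + 1) * (3 + 2 * ‖z‖)) * ‖z‖ / (2 * ‖z‖ + 2 - ‖z‖) +
        ‖L 0‖ * (2 * ‖z‖ + 2 + ‖z‖) / (2 * ‖z‖ + 2 - ‖z‖) := hborel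
    _ ≤ 6 * (|C| + 1) * (1 + ‖z‖) + 3 * ‖L 0‖ * (1 + ‖z‖) := by
      gcongr <;> rw [div_le_iff₀ (by linarith)]
      · have : 0 ≤ (|C| + 1) * (2 * ‖z‖ ^ 2 + 12 * ‖z‖ + 12) := by positivity
        linarith
      · have : 0 ≤ ‖L 0‖ * (3 * ‖z‖ ^ 2 + 6 * ‖z‖ + 4) := by positivity
        linarith
    _ = (6 * (|C| + 1) + 3 * ‖L 0‖) * (1 + ‖z‖) := by ring

theorem eq_add_mul_of_norm_le_linear {L : ℂ → ℂ} (hL : Differentiable ℂ L) {A : ℝ}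
    (hA : ∀ z, ‖L z‖ ≤ A * (1 + ‖z‖)) (z : ℂ) : L z = L 0 + deriv L 0 * z := by
  have hA₀ : 0 ≤ A := by simpa using (norm_nonneg _).trans (hA 0)
  have hderiv_le (w : ℂ) : ‖deriv L w‖ ≤ 2 * A := by
    have hsphere : ∀ v ∈ Metric.sphere w (1 + ‖w‖), ‖L v‖ ≤ A * (1 + (1 + ‖w‖ + ‖w‖)) := by
      intro v hv
      refine (hA v).trans ?_
      gcongr
      exact (norm_le_norm_sub_add v w).trans_eq (by rw [mem_sphere_iff_norm.1 hv])
    refine (Complex.norm_deriv_le_of_forall_mem_sphere_norm_le (by positivity)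
      hL.diffContOnCl hsphere).trans ?_
    rw [div_le_iff₀ (by positivity)]
    linarith
  have hderiv (w : ℂ) : deriv L w = deriv L 0 :=
    hL.deriv.apply_eq_apply_of_bounded
      (isBounded_iff_forall_norm_le.2 ⟨_, Set.forall_mem_range.2 hderiv_le⟩) w 0
  have haffine (w : ℂ) : HasDerivAt (fun w ↦ L w - deriv L 0 * w) 0 w := by
    refine ((hL w).hasDerivAt.sub ((hasDerivAt_id w).const_mul _)).congr_deriv ?_
    rw [hderiv w, mul_one, sub_self]
  have hconst := is_const_of_deriv_eq_zero (fun w ↦ (haffine w).differentiableAt)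
    (fun w ↦ (haffine w).deriv) z 0
  linear_combination hconst

theorem exists_eq_exp_add_mul {g : ℂ → ℂ} (hg : Differentiable ℂ g) (hg₀ : ∀ z, g z ≠ 0) {C : ℝ}
    (hC : ∀ z, Real.log ‖g z‖ ≤ C * (1 + ‖z‖)) :
    ∃ a b : ℂ, ∀ z, g z = Complex.exp (a + b * z) := by
  obtain ⟨L, hL, hgL⟩ := exists_differentiable_exp_eq hg hg₀
  have hre (z : ℂ) : (L z).re ≤ C * (1 + ‖z‖) := by
    simpa [hgL z, Complex.norm_exp] using hC z
  obtain ⟨A, hA⟩ := exists_norm_le_linear_of_re_le_linear hL hre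
  exact ⟨L 0, deriv L 0, fun z ↦ by rw [hgL, ← eq_add_mul_of_norm_le_linear hL hA]⟩

theorem differentiable_of_continuous_of_differentiableAt_off_real {g : ℂ → ℂ} (hc : Continuous g)
    (hd : ∀ z : ℂ, z.im ≠ 0 → DifferentiableAt ℂ g z) : Differentiable ℂ g := by
  rw [← differentiableOn_univ,
    ← Complex.isConservativeOn_and_continuousOn_iff_isDifferentiableOn isOpen_univ]
  refine ⟨fun z w _ ↦ ?_, hc.continuousOn⟩
  have rect_eq_zero (z w : ℂ) (hzw : 0 ≤ z.im * w.im) :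
      (∫ x : ℝ in z.re..w.re, g (x + z.im * Complex.I)) -
        (∫ x : ℝ in z.re..w.re, g (x + w.im * Complex.I)) +
        Complex.I • (∫ y : ℝ in z.im..w.im, g (w.re + y * Complex.I)) -
        Complex.I • (∫ y : ℝ in z.im..w.im, g (z.re + y * Complex.I)) = 0 := by
    refine Complex.integral_boundary_rect_eq_zero_of_continuousOn_of_differentiableOn g z w
      hc.continuousOn fun x hx ↦ (hd x fun hx₀ ↦ ?_).differentiableWithinAt
    have him := hx.2
    simp only [Set.mem_preimage, Set.mem_Ioo, min_lt_iff, lt_max_iff, hx₀] at him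
    rcases him with ⟨h | h, h' | h'⟩ <;> nlinarith
  -- The real axis cuts the rectangle with corners `z`, `w` into two, each on one side of it.
  have lower := rect_eq_zero z ⟨w.re, 0⟩ (by simp)
  have upper := rect_eq_zero ⟨z.re, 0⟩ w (by simp)
  have hint (a b s : ℝ) : IntervalIntegrable (fun y : ℝ ↦ g (s + y * Complex.I)) volume a b :=
    (by fun_prop : Continuous fun y : ℝ ↦ g (s + y * Complex.I)).intervalIntegrable _ _
  rw [← add_eq_zero_iff_eq_neg, Complex.wedgeIntegral_add_wedgeIntegral_eq,
    ← intervalIntegral.integral_add_adjacent_intervals (hint z.im 0 w.re) (hint 0 w.im w.re),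
    ← intervalIntegral.integral_add_adjacent_intervals (hint z.im 0 z.re) (hint 0 w.im z.re)]
  simp only [smul_eq_mul] at *
  linear_combination lower + upper

end Entire

section SchwarzReflection

/-- The Schwarz reflection of `f` in the real line and the unit circle: the extension of `f` from
the closed upper half-plane to `ℂ` by `z ↦ 1 / conj (f (conj z))`. -/
def schwarzReflection (f : ℂ → ℂ) (z : ℂ) : ℂ :=
  if 0 ≤ z.im then f z else (conj (f (conj z)))⁻¹

/-- `f` is continuous and zero-free on the closed upper half-plane, holomorphic in its interior,
and both `f` and `1 / f` have at most exponential growth. -/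
structure IsZeroFreeExpType (f : ℂ → ℂ) : Prop where
  continuousOn : ContinuousOn f {z | 0 ≤ z.im}
  differentiableOn : DifferentiableOn ℂ f {z | 0 < z.im}
  ne_zero : ∀ z : ℂ, 0 ≤ z.im → f z ≠ 0
  growth : ∃ C, ∀ z : ℂ, 0 ≤ z.im → |Real.log ‖f z‖| ≤ C * (1 + ‖z‖)

namespace IsZeroFreeExpType

variable {f g : ℂ → ℂ}

theorem div (hf : IsZeroFreeExpType f) (hg : IsZeroFreeExpType g) :
    IsZeroFreeExpType fun z ↦ f z / g z where
  continuousOn := hf.continuousOn.div hg.continuousOn hg.ne_zero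
  differentiableOn :=
    hf.differentiableOn.div hg.differentiableOn fun z hz ↦ hg.ne_zero z (le_of_lt hz)
  ne_zero z hz := div_ne_zero (hf.ne_zero z hz) (hg.ne_zero z hz)
  growth := by
    obtain ⟨C, hC⟩ := hf.growth
    obtain ⟨D, hD⟩ := hg.growth
    refine ⟨C + D, fun z hz ↦ ?_⟩
    rw [norm_div, Real.log_div (norm_ne_zero_iff.2 (hf.ne_zero z hz))
      (norm_ne_zero_iff.2 (hg.ne_zero z hz)), add_mul]
    exact (abs_sub _ _).trans (add_le_add (hC z hz) (hD z hz))

theorem continuous_schwarzReflection (hf : IsZeroFreeExpType f) (hunit : ∀ x : ℝ, ‖f x‖ = 1) :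
    Continuous (schwarzReflection f) := by
  have hclosed : IsClosed {z : ℂ | 0 ≤ z.im} := isClosed_le continuous_const Complex.continuous_im
  have hlower : closure {z : ℂ | ¬0 ≤ z.im} ⊆ {z | z.im ≤ 0} :=
    closure_minimal (fun z hz ↦ (not_le.1 hz).le)
      (isClosed_le Complex.continuous_im continuous_const)
  have hconj : ∀ z ∈ closure {z : ℂ | ¬0 ≤ z.im}, 0 ≤ (conj z).im := fun z hz ↦ by
    simpa using hlower hz
  refine continuous_if (fun z hz ↦ ?_) (by rw [hclosed.closure_eq]; exact hf.continuousOn) ?_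
  · rw [Complex.frontier_setOfPred_le_im] at hz
    have hz' : z = (z.re : ℂ) := Complex.ext rfl (by simpa using hz)
    rw [hz', Complex.conj_ofReal]
    refine eq_inv_of_mul_eq_one_left ?_
    rw [Complex.mul_conj, Complex.normSq_eq_norm_sq, hunit]
    simp
  · exact (Complex.continuous_conj.comp_continuousOn
      (hf.continuousOn.comp Complex.continuous_conj.continuousOn hconj)).inv₀
      fun z hz ↦ (map_ne_zero _).2 (hf.ne_zero _ (hconj z hz))

theorem differentiable_schwarzReflection (hf : IsZeroFreeExpType f)
    (hunit : ∀ x : ℝ, ‖f x‖ = 1) : Differentiable ℂ (schwarzReflection f) := by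
  refine differentiable_of_continuous_of_differentiableAt_off_real
    (hf.continuous_schwarzReflection hunit) fun z hz ↦ ?_
  have hupper : IsOpen {w : ℂ | 0 < w.im} := isOpen_lt continuous_const Complex.continuous_im
  rcases hz.lt_or_gt with hz | hz
  · have heq : schwarzReflection f =ᶠ[𝓝 z] fun w ↦ (conj (f (conj w)))⁻¹ := by
      filter_upwards [(isOpen_lt Complex.continuous_im continuous_const).mem_nhds hz] with w hw
      exact if_neg (not_le.2 hw)
    have hz' : 0 < (conj z).im := by simpa using hz
    refine DifferentiableAt.congr_of_eventuallyEq (DifferentiableAt.inv ?_ ?_) heq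
    · simpa [Function.comp_def] using
        (hf.differentiableOn.differentiableAt (hupper.mem_nhds hz')).conj_conj
    · exact (map_ne_zero _).2 (hf.ne_zero _ hz'.le)
  · have heq : schwarzReflection f =ᶠ[𝓝 z] f := by
      filter_upwards [hupper.mem_nhds hz] with w hw
      exact if_pos (le_of_lt hw)
    exact (hf.differentiableOn.differentiableAt (hupper.mem_nhds hz)).congr_of_eventuallyEq heq

theorem schwarzReflection_ne_zero (hf : IsZeroFreeExpType f) (z : ℂ) :
    schwarzReflection f z ≠ 0 := by
  unfold schwarzReflection
  split_ifs with hz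
  · exact hf.ne_zero z hz
  · exact inv_ne_zero ((map_ne_zero _).2 (hf.ne_zero _ (by simpa using (not_le.1 hz).le)))

theorem exists_log_norm_schwarzReflection_le (hf : IsZeroFreeExpType f) :
    ∃ C, ∀ z, Real.log ‖schwarzReflection f z‖ ≤ C * (1 + ‖z‖) := by
  obtain ⟨C, hC⟩ := hf.growth
  refine ⟨C, fun z ↦ ?_⟩
  unfold schwarzReflection
  split_ifs with hz
  · exact (le_abs_self _).trans (hC z hz)
  · rw [norm_inv, RCLike.norm_conj, Real.log_inv, ← RCLike.norm_conj z]
    exact (neg_le_abs _).trans (hC _ (by simpa using (not_le.1 hz).le))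

theorem exists_eq_exp_of_unimodular (hf : IsZeroFreeExpType f) (hunit : ∀ x : ℝ, ‖f x‖ = 1) :
    ∃ a b : ℂ, ∀ x : ℝ, f x = Complex.exp (a + b * x) := by
  obtain ⟨C, hC⟩ := hf.exists_log_norm_schwarzReflection_le
  obtain ⟨a, b, hab⟩ := exists_eq_exp_add_mul (hf.differentiable_schwarzReflection hunit)
    hf.schwarzReflection_ne_zero hC
  exact ⟨a, b, fun x ↦ by rw [← hab, schwarzReflection, if_pos (by simp)]⟩

theorem eq_one_of_unimodular_of_hasDerivAt_zero (hf : IsZeroFreeExpType f)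
    (hunit : ∀ x : ℝ, ‖f x‖ = 1) (hf₀ : f 0 = 1) (hderiv : HasDerivAt (fun x : ℝ ↦ f x) 0 0)
    (x : ℝ) : f x = 1 := by
  obtain ⟨a, b, hab⟩ := hf.exists_eq_exp_of_unimodular hunit
  have ha : Complex.exp a = 1 := by simpa [hf₀] using (hab 0).symm
  have hexp (y : ℝ) : f y = Complex.exp (b * y) := by rw [hab, Complex.exp_add, ha, one_mul]
  have hb : b = 0 := by
    have hderiv' : HasDerivAt (fun y : ℝ ↦ Complex.exp (b * y)) b 0 := by
      simpa using (((hasDerivAt_id ((0 : ℝ) : ℂ)).const_mul b).cexp).comp_ofReal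
    exact hderiv'.unique (by simpa only [hexp] using hderiv)
  simp [hexp, hb]

end IsZeroFreeExpType

end SchwarzReflection

section Primitive

theorem absolutelyContinuousOnInterval_of_dist_le {X Y : Type*} [PseudoMetricSpace X]
    [PseudoMetricSpace Y] {F : ℝ → X} {G : ℝ → Y} {a b : ℝ} (K : ℝ)
    (hG : AbsolutelyContinuousOnInterval G a b)
    (hFG : ∀ x ∈ Set.uIcc a b, ∀ y ∈ Set.uIcc a b, dist (F x) (F y) ≤ K * dist (G x) (G y)) :
    AbsolutelyContinuousOnInterval F a b := by
  refine squeeze_zero' (Eventually.of_forall fun _ ↦ Finset.sum_nonneg fun _ _ ↦ dist_nonneg) ?_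
    (by simpa only [mul_zero] using Tendsto.const_mul K hG)
  filter_upwards [mem_inf_of_right (mem_principal_self _)] with I hI
  rw [Finset.mul_sum]
  exact Finset.sum_le_sum fun i hi ↦ hFG _ (hI.1 i hi).1 _ (hI.1 i hi).2

theorem intervalIntegrable_of_locallyIntegrable {E : Type*} [NormedAddCommGroup E] {g : ℝ → E}
    (hg : LocallyIntegrable g) (a b : ℝ) :
    IntervalIntegrable g volume a b :=
  (hg.integrableOn_isCompact isCompact_uIcc).intervalIntegrable

theorem locallyIntegrable_continuous_mul {A : Type*} [NormedRing A] {f g : ℝ → A}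
    (hf : Continuous f) (hg : LocallyIntegrable g) : LocallyIntegrable fun x ↦ f x * g x := by
  rw [← locallyIntegrableOn_univ] at hg ⊢
  exact hg.continuousOn_mul hf.continuousOn isOpen_univ.isLocallyClosed

theorem locallyIntegrable_mul_continuous {A : Type*} [NormedRing A] {f g : ℝ → A}
    (hf : LocallyIntegrable f) (hg : Continuous g) : LocallyIntegrable fun x ↦ f x * g x := by
  rw [← locallyIntegrableOn_univ] at hf ⊢
  exact hf.mul_continuousOn hg.continuousOn isOpen_univ.isLocallyClosed

variable {E E' : Type*} [NormedAddCommGroup E] [NormedSpace ℝ E] [NormedAddCommGroup E']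
  [NormedSpace ℝ E']

theorem absolutelyContinuousOnInterval_comp_of_contDiff
    {φ : E → E'} (hφ : ContDiff ℝ 1 φ) {F : ℝ → E} {a b : ℝ}
    (hF : AbsolutelyContinuousOnInterval F a b) :
    AbsolutelyContinuousOnInterval (fun x ↦ φ (F x)) a b := by
  obtain ⟨K, hK⟩ := hφ.locallyLipschitz.locallyLipschitzOn.exists_lipschitzOnWith_of_compact
    (isCompact_uIcc.image_of_continuousOn hF.continuousOn)
  exact absolutelyContinuousOnInterval_of_dist_le K hF fun x hx y hy ↦
    hK.dist_le_mul _ (Set.mem_image_of_mem F hx) _ (Set.mem_image_of_mem F hy)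

/-- `F` is a primitive of `g` in the sense of Lebesgue: it is locally absolutely continuous, and
its almost everywhere derivative is the locally integrable function `g`. -/
structure IsACPrimitive (F g : ℝ → E) : Prop where
  absolutelyContinuous : ∀ a b, AbsolutelyContinuousOnInterval F a b
  ae_hasDerivAt : ∀ᵐ x, HasDerivAt F (g x) x
  locallyIntegrable : LocallyIntegrable g

namespace IsACPrimitive

variable {F g : ℝ → E}

theorem of_contDiff (hF : ContDiff ℝ 1 F) : IsACPrimitive F (deriv F) where
  absolutelyContinuous _ _ := hF.contDiffOn.absolutelyContinuousOnInterval
  ae_hasDerivAt := Eventually.of_forall fun x ↦ (hF.differentiable one_ne_zero x).hasDerivAt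
  locallyIntegrable := (hF.continuous_deriv le_rfl).locallyIntegrable

theorem of_eq_add_integral [CompleteSpace E] (hg : LocallyIntegrable g)
    (hF : ∀ a b, F b = F a + ∫ x in a..b, g x) : IsACPrimitive F g where
  absolutelyContinuous a b := by
    have hint := intervalIntegrable_of_locallyIntegrable hg
    refine absolutelyContinuousOnInterval_of_dist_le 1
      ((hint a b).norm.absolutelyContinuousOnInterval_intervalIntegral Set.left_mem_uIcc)
      fun x _ y _ ↦ ?_
    rw [dist_comm (F x), dist_eq_norm, hF x y, add_sub_cancel_left, one_mul, dist_comm,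
      Real.dist_eq, intervalIntegral.integral_interval_sub_left (hint a y).norm (hint a x).norm]
    exact intervalIntegral.norm_integral_le_abs_integral_norm
  ae_hasDerivAt := by
    filter_upwards [_root_.LocallyIntegrable.ae_hasDerivAt_integral hg] with x hx
    exact ((hx 0).const_add (F 0)).congr_of_eventuallyEq (Eventually.of_forall fun y ↦ hF 0 y)
  locallyIntegrable := hg

theorem continuous (hF : IsACPrimitive F g) : Continuous F :=
  continuous_iff_continuousAt.2 fun x ↦
    (hF.absolutelyContinuous (x - 1) (x + 1)).continuousOn.continuousAt
      (by rw [Set.uIcc_of_le (by linarith)]; exact Icc_mem_nhds (by linarith) (by linarith))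

theorem congr_ae {g' : ℝ → E} (hF : IsACPrimitive F g) (hg : g =ᵐ[volume] g') :
    IsACPrimitive F g' where
  absolutelyContinuous := hF.absolutelyContinuous
  ae_hasDerivAt := by filter_upwards [hF.ae_hasDerivAt, hg] with x hx hgx using hgx ▸ hx
  locallyIntegrable := hF.locallyIntegrable.congr hg

theorem integral_eq_sub [CompleteSpace E] (hF : IsACPrimitive F g) (a b : ℝ) :
    ∫ x in a..b, g x = F b - F a := by
  have hG : IsACPrimitive (fun x ↦ ∫ t in a..x, g t) g :=
    of_eq_add_integral hF.locallyIntegrable fun x y ↦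
      (intervalIntegral.integral_add_adjacent_intervals
        (intervalIntegrable_of_locallyIntegrable hF.locallyIntegrable a x)
        (intervalIntegrable_of_locallyIntegrable hF.locallyIntegrable x y)).symm
  obtain ⟨C, hC⟩ := AbsolutelyContinuousOnInterval.const_of_ae_hasDerivAt_zero
    ((hF.absolutelyContinuous a b).fun_sub (hG.absolutelyContinuous a b)) (by
      filter_upwards [hF.ae_hasDerivAt, hG.ae_hasDerivAt] with x hFx hGx _
      simpa only [sub_self] using hFx.fun_sub hGx)
  have h := (hC b Set.right_mem_uIcc).trans (hC a Set.left_mem_uIcc).symm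
  simp only [intervalIntegral.integral_same, sub_zero] at h
  rw [← h, sub_sub_cancel]

theorem add {F' g' : ℝ → E} (hF : IsACPrimitive F g) (hF' : IsACPrimitive F' g') :
    IsACPrimitive (fun x ↦ F x + F' x) fun x ↦ g x + g' x where
  absolutelyContinuous a b := (hF.absolutelyContinuous a b).fun_add (hF'.absolutelyContinuous a b)
  ae_hasDerivAt := by
    filter_upwards [hF.ae_hasDerivAt, hF'.ae_hasDerivAt] with x hx hx' using hx.add hx'
  locallyIntegrable := hF.locallyIntegrable.add hF'.locallyIntegrable

theorem clm_comp (hF : IsACPrimitive F g) (A : E →L[ℝ] E') :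
    IsACPrimitive (fun x ↦ A (F x)) fun x ↦ A (g x) where
  absolutelyContinuous a b :=
    absolutelyContinuousOnInterval_comp_of_contDiff A.contDiff (hF.absolutelyContinuous a b)
  ae_hasDerivAt := by
    filter_upwards [hF.ae_hasDerivAt] with x hx using A.hasFDerivAt.comp_hasDerivAt x hx
  locallyIntegrable x := (hF.locallyIntegrable x).imp fun _ hs ↦ ⟨hs.1, A.integrable_comp hs.2⟩

theorem mul {A : Type*} [NormedRing A] [NormedAlgebra ℝ A] [NormMulClass A] {F G f g : ℝ → A}
    (hF : IsACPrimitive F f) (hG : IsACPrimitive G g) :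
    IsACPrimitive (fun x ↦ F x * G x) fun x ↦ f x * G x + F x * g x where
  absolutelyContinuous a b := (hF.absolutelyContinuous a b).fun_smul (hG.absolutelyContinuous a b)
  ae_hasDerivAt := by
    filter_upwards [hF.ae_hasDerivAt, hG.ae_hasDerivAt] with x hx hx' using hx.mul hx'
  locallyIntegrable := (locallyIntegrable_mul_continuous hF.locallyIntegrable hG.continuous).add
    (locallyIntegrable_continuous_mul hF.continuous hG.locallyIntegrable)

theorem exp {F g : ℝ → ℝ} (hF : IsACPrimitive F g) :
    IsACPrimitive (fun x ↦ Real.exp (F x)) fun x ↦ Real.exp (F x) * g x where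
  absolutelyContinuous a b :=
    absolutelyContinuousOnInterval_comp_of_contDiff Real.contDiff_exp
      (hF.absolutelyContinuous a b)
  ae_hasDerivAt := by filter_upwards [hF.ae_hasDerivAt] with x hx using hx.exp
  locallyIntegrable :=
    locallyIntegrable_continuous_mul hF.continuous.rexp hF.locallyIntegrable

theorem integral_Ioi_eq_sub [CompleteSpace E] (hF : IsACPrimitive F g) {l : E}
    (hl : Tendsto F atTop (𝓝 l)) {x : ℝ} (hg : IntegrableOn g (Set.Ioi x)) :
    ∫ t in Set.Ioi x, g t = l - F x := by
  refine tendsto_nhds_unique (intervalIntegral_tendsto_integral_Ioi x hg tendsto_id) ?_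
  simpa only [hF.integral_eq_sub, id_eq] using hl.sub_const (F x)

theorem antitone {F g : ℝ → ℝ} (hF : IsACPrimitive F g) (hg : ∀ᵐ x, g x ≤ 0) : Antitone F := by
  intro a b hab
  have h := intervalIntegral.integral_nonneg_of_ae hab (f := fun x ↦ -g x)
    (hg.mono fun x hx ↦ neg_nonneg.2 hx)
  rw [intervalIntegral.integral_neg, hF.integral_eq_sub] at h
  linarith

theorem le_mul_exp_integral {F g β : ℝ → ℝ} (hF : IsACPrimitive F g) (hβ : LocallyIntegrable β)
    (hle : ∀ᵐ x, g x ≤ β x * F x) {a b : ℝ} (hab : a ≤ b) :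
    F b ≤ F a * Real.exp (∫ x in a..b, β x) := by
  have hR : IsACPrimitive (fun x ↦ -∫ t in a..x, β t) fun x ↦ -β x :=
    of_eq_add_integral hβ.neg fun x y ↦ by
      rw [intervalIntegral.integral_neg, ← neg_add, intervalIntegral.integral_add_adjacent_intervals
        (intervalIntegrable_of_locallyIntegrable hβ a x)
        (intervalIntegrable_of_locallyIntegrable hβ x y)]
  have hanti : Antitone fun x ↦ F x * Real.exp (-∫ t in a..x, β t) := by
    refine (hF.mul hR.exp).antitone ?_
    filter_upwards [hle] with x hx
    calc _ = (g x - β x * F x) * Real.exp (-∫ t in a..x, β t) := by ring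
      _ ≤ 0 := mul_nonpos_of_nonpos_of_nonneg (sub_nonpos.2 hx) (Real.exp_pos _).le
  have h := hanti hab
  simp only [intervalIntegral.integral_same, neg_zero, Real.exp_zero, mul_one] at h
  rwa [Real.exp_neg, ← div_eq_mul_inv, div_le_iff₀ (Real.exp_pos _)] at h

end IsACPrimitive

end Primitive

section Tail

variable {E : Type*} [NormedAddCommGroup E] [NormedSpace ℝ E]

theorem eq_zero_of_tendsto_of_tendsto_hasDerivAt {f f' : ℝ → E} {a l : E}
    (hf : ∀ x, HasDerivAt f (f' x) x) (hfa : Tendsto f atTop (𝓝 a))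
    (hfl : Tendsto f' atTop (𝓝 l)) : l = 0 := by
  have hincr : Tendsto (fun x : ℝ ↦ f (x + 1) - f x) atTop (𝓝 0) := by
    simpa only [sub_self, Function.comp_def, id_eq] using
      (hfa.comp (tendsto_atTop_add_const_right atTop (1 : ℝ) tendsto_id)).sub hfa
  refine tendsto_nhds_unique (Metric.tendsto_nhds.2 fun ε hε ↦ ?_) hincr
  obtain ⟨X, hX⟩ := Metric.tendsto_atTop.1 hfl (ε / 2) (half_pos hε)
  filter_upwards [eventually_ge_atTop X] with x hx
  have hmv := (convex_Ici X).norm_image_sub_le_of_norm_hasDerivWithin_le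
    (f := fun y ↦ f y - y • l) (f' := fun y ↦ f' y - (1 : ℝ) • l) (C := ε / 2)
    (fun y _ ↦ ((hf y).fun_sub ((hasDerivAt_id' y).smul_const l)).hasDerivWithinAt)
    (fun y hy ↦ by rw [one_smul, ← dist_eq_norm]; exact (hX y hy).le)
    (Set.mem_Ici.2 hx) (Set.mem_Ici.2 (hx.trans (lt_add_one x).le))
  rw [add_sub_cancel_left, norm_one, mul_one, add_smul, one_smul] at hmv
  rw [dist_eq_norm]
  calc _ = ‖f (x + 1) - (x • l + l) - (f x - x • l)‖ := by congr 1; abel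
    _ ≤ ε / 2 := hmv
    _ < ε := half_lt_self hε

theorem one_add_integral_Ioi_le_exp {p φ : ℝ → ℝ} (hp : Integrable p) (hp₀ : ∀ x, 0 ≤ p x)
    (hpφ : ∀ x, IntegrableOn (fun t ↦ p t * φ t) (Set.Ioi x))
    (hle : ∀ x, φ x ≤ 1 + ∫ t in Set.Ioi x, p t * φ t) (x : ℝ) :
    1 + ∫ t in Set.Ioi x, p t * φ t ≤ Real.exp (∫ t in Set.Ioi x, p t) := by
  have hF : IsACPrimitive (fun x ↦ -(1 + ∫ t in Set.Ioi x, p t * φ t)) fun x ↦ p x * φ x :=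
    .of_eq_add_integral (fun x ↦ ⟨Set.Ioi (x - 1), Ioi_mem_nhds (sub_one_lt x), hpφ (x - 1)⟩)
      fun a b ↦ by rw [← intervalIntegral.integral_Ioi_sub_Ioi' (hpφ a) (hpφ b)]; ring
  have hgron : ∀ b, x ≤ b → 1 + ∫ t in Set.Ioi x, p t * φ t ≤
      (1 + ∫ t in Set.Ioi b, p t * φ t) * Real.exp (∫ t in x..b, p t) := by
    intro b hb
    have h := hF.le_mul_exp_integral hp.locallyIntegrable.neg
      (Eventually.of_forall fun t ↦ by
        simpa only [Pi.neg_apply, neg_mul_neg] using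
          mul_le_mul_of_nonneg_left (hle t) (hp₀ t)) hb
    simp only [intervalIntegral.integral_neg, Pi.neg_apply, Real.exp_neg, ← div_eq_mul_inv] at h
    rw [le_div_iff₀ (Real.exp_pos _)] at h
    linarith
  have htail : Tendsto (fun b ↦ ∫ t in Set.Ioi b, p t * φ t) atTop (𝓝 0) :=
    tendsto_integral_Ioi_zero tendsto_id
  have hlim := (htail.const_add 1).mul
    (Real.continuous_exp.continuousAt.tendsto.comp
      (intervalIntegral_tendsto_integral_Ioi x hp.integrableOn tendsto_id))
  rw [add_zero, one_mul] at hlim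
  exact ge_of_tendsto hlim ((eventually_ge_atTop x).mono hgron)

end Tail

section Jost

variable {c : ℝ → ℝ} {k : ℂ} {u : ℝ → ℂ}

theorem ofReal_qfun (c : ℝ → ℝ) (x : ℝ) : (qfun c x : ℂ) = 1 - 1 / (c x : ℂ) ^ 2 := by
  rw [qfun]; push_cast; rfl

theorem SolvesHelmholtz.isACPrimitive_deriv (hu : SolvesHelmholtz c k u)
    (hq : LocallyIntegrable (qfun c)) :
    IsACPrimitive (deriv u) fun x ↦ -(k ^ 2 / (c x : ℂ) ^ 2) * u x := by
  refine .of_eq_add_integral ?_ hu.2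
  have hcoeff : LocallyIntegrable fun x ↦ k ^ 2 * ((qfun c x : ℂ) - 1) :=
    locallyIntegrable_continuous_mul continuous_const
      (.sub (fun x ↦ (hq x).imp fun _ hs ↦ ⟨hs.1, hs.2.ofReal⟩) (locallyIntegrable_const 1))
  refine (locallyIntegrable_mul_continuous hcoeff hu.1.continuous).congr
    (Eventually.of_forall fun x ↦ ?_)
  simp only [ofReal_qfun]
  ring

/-- The Faddeev function `m(x) = e^{-ikx} u(x)` of a solution `u`, which for a Jost solution from
`+∞` tends to `1` at `+∞`. -/
def faddeev (k : ℂ) (u : ℝ → ℂ) (x : ℝ) : ℂ := Complex.exp (-(Complex.I * k * x)) * u x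

theorem contDiff_exp_mul_ofReal (s : ℂ) : ContDiff ℝ 1 fun x : ℝ ↦ Complex.exp (s * x) :=
  (contDiff_const.mul Complex.ofRealCLM.contDiff).cexp

theorem hasDerivAt_exp_mul_ofReal (s : ℂ) (x : ℝ) :
    HasDerivAt (fun x : ℝ ↦ Complex.exp (s * x)) (s * Complex.exp (s * x)) x := by
  simpa only [Complex.ofRealCLM_apply, Complex.ofReal_one, mul_one, mul_comm _ s] using
    ((Complex.ofRealCLM.hasDerivAt (x := x)).const_mul s).cexp

theorem isACPrimitive_exp_mul_ofReal (s : ℂ) :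
    IsACPrimitive (fun x : ℝ ↦ Complex.exp (s * x)) fun x : ℝ ↦ s * Complex.exp (s * x) := by
  have h := IsACPrimitive.of_contDiff (contDiff_exp_mul_ofReal s)
  rwa [funext fun x ↦ (hasDerivAt_exp_mul_ofReal s x).deriv] at h

theorem contDiff_faddeev (hu : ContDiff ℝ 1 u) : ContDiff ℝ 1 (faddeev k u) :=
  (contDiff_const.mul Complex.ofRealCLM.contDiff).neg.cexp.mul hu

theorem deriv_faddeev (hu : Differentiable ℝ u) (x : ℝ) :
    deriv (faddeev k u) x =
      Complex.exp (-(Complex.I * k * x)) * (deriv u x - Complex.I * k * u x) := by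
  have h := (hasDerivAt_exp_mul_ofReal (-(Complex.I * k)) x).mul (hu x).hasDerivAt
  simp only [neg_mul] at h
  exact h.deriv.trans (by ring)

namespace SolvesHelmholtz

theorem isACPrimitive_deriv_faddeev (hu : SolvesHelmholtz c k u)
    (hq : LocallyIntegrable (qfun c)) :
    IsACPrimitive (deriv (faddeev k u)) fun x ↦
      k ^ 2 * (qfun c x * faddeev k u x) - 2 * Complex.I * k * deriv (faddeev k u) x := by
  have hdiff := hu.1.differentiable one_ne_zero
  have h := (isACPrimitive_exp_mul_ofReal (-(Complex.I * k))).mul ((hu.isACPrimitive_deriv hq).add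
    ((IsACPrimitive.of_contDiff hu.1).clm_comp (.mul ℝ ℂ (-(Complex.I * k)))))
  rw [show deriv (faddeev k u) = _ from funext fun x ↦ deriv_faddeev hdiff x]
  simp only [ContinuousLinearMap.mul_apply', neg_mul, ← sub_eq_add_neg] at h
  refine h.congr_ae (Eventually.of_forall fun x ↦ ?_)
  simp only [faddeev, ofReal_qfun]
  linear_combination -Complex.exp (-(Complex.I * k * x)) * k ^ 2 * u x * Complex.I_sq

theorem isACPrimitive_deriv_faddeev_add (hu : SolvesHelmholtz c k u)
    (hq : LocallyIntegrable (qfun c)) :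
    IsACPrimitive (fun x ↦ deriv (faddeev k u) x + 2 * Complex.I * k * faddeev k u x)
      fun x ↦ k ^ 2 * (qfun c x * faddeev k u x) :=
  ((hu.isACPrimitive_deriv_faddeev hq).add ((IsACPrimitive.of_contDiff
    (contDiff_faddeev hu.1)).clm_comp (.mul ℝ ℂ (2 * Complex.I * k)))).congr_ae
      (Eventually.of_forall fun _ ↦ sub_add_cancel _ _)

theorem isACPrimitive_exp_mul_deriv_faddeev (hu : SolvesHelmholtz c k u)
    (hq : LocallyIntegrable (qfun c)) :
    IsACPrimitive (fun x : ℝ ↦ Complex.exp (2 * Complex.I * k * x) * deriv (faddeev k u) x)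
      fun x : ℝ ↦ k ^ 2 * (Complex.exp (2 * Complex.I * k * x) * (qfun c x * faddeev k u x)) := by
  refine ((isACPrimitive_exp_mul_ofReal _).mul (hu.isACPrimitive_deriv_faddeev hq)).congr_ae
    (Eventually.of_forall fun x ↦ ?_)
  ring

end SolvesHelmholtz

theorem antitone_norm_exp_two_I_mul (hk : 0 ≤ k.im) :
    Antitone fun x : ℝ ↦ ‖Complex.exp (2 * Complex.I * k * x)‖ := by
  intro x y hxy
  have hre : ∀ t : ℝ, (2 * Complex.I * k * t).re = -(2 * (k.im * t)) := fun t ↦ by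
    simp [mul_assoc]
  simp only [Complex.norm_exp, hre]
  gcongr

namespace IsJostPlus

theorem differentiable (hu : IsJostPlus c k u) : Differentiable ℝ u :=
  hu.1.1.differentiable one_ne_zero

theorem integrableOn_qfun_mul_faddeev (hu : IsJostPlus c k u) (hq : Integrable (qfun c)) (x : ℝ) :
    IntegrableOn (fun t ↦ (qfun c t : ℂ) * faddeev k u t) (Set.Ioi x) := by
  have hm := (contDiff_faddeev (k := k) hu.1.1).continuous
  have hloc := locallyIntegrable_mul_continuous (hq.ofReal (𝕜 := ℂ)).locallyIntegrable hm
  have hO : (fun t ↦ (qfun c t : ℂ) * faddeev k u t) =O[atTop] fun t ↦ (qfun c t : ℂ) := by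
    simpa only [mul_one] using (Asymptotics.isBigO_refl (fun t ↦ (qfun c t : ℂ)) atTop).mul
      (Tendsto.isBigO_one ℂ (f' := faddeev k u) hu.2)
  exact ((hloc.locallyIntegrableOn _).integrableOn_of_isBigO_atTop hO
    (hq.ofReal.integrableAtFilter _)).mono_set Set.Ioi_subset_Ici_self

theorem integrableOn_exp_mul_qfun_mul_faddeev (hu : IsJostPlus c k u) (hq : Integrable (qfun c))
    (hk : 0 ≤ k.im) (x : ℝ) :
    IntegrableOn (fun t : ℝ ↦ Complex.exp (2 * Complex.I * k * t) * (qfun c t * faddeev k u t))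
      (Set.Ioi x) := by
  refine (hu.integrableOn_qfun_mul_faddeev hq x).bdd_mul (by fun_prop)
    (c := ‖Complex.exp (2 * Complex.I * k * x)‖) ?_
  filter_upwards [ae_restrict_mem measurableSet_Ioi] with t ht
    using antitone_norm_exp_two_I_mul hk ht.le

theorem tendsto_deriv_faddeev (hu : IsJostPlus c k u) (hq : Integrable (qfun c)) :
    Tendsto (deriv (faddeev k u)) atTop (𝓝 0) := by
  have hA := hu.1.isACPrimitive_deriv_faddeev_add hq.locallyIntegrable
  have hint := (hu.integrableOn_qfun_mul_faddeev hq 0).const_mul (k ^ 2)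
  have hlim := ((intervalIntegral_tendsto_integral_Ioi 0 hint tendsto_id).add_const
    (deriv (faddeev k u) 0 + 2 * Complex.I * k * faddeev k u 0)).sub
      (Tendsto.const_mul (2 * Complex.I * k) (f := faddeev k u) hu.2)
  simp only [hA.integral_eq_sub, id_eq, sub_add_cancel, add_sub_cancel_right] at hlim
  have hdiff := (contDiff_faddeev (k := k) hu.1.1).differentiable one_ne_zero
  exact eq_zero_of_tendsto_of_tendsto_hasDerivAt (fun x ↦ (hdiff x).hasDerivAt) hu.2 hlim ▸ hlim

theorem integral_Ioi_qfun_mul_faddeev (hu : IsJostPlus c k u) (hq : Integrable (qfun c)) (x : ℝ) :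
    k ^ 2 * ∫ t in Set.Ioi x, qfun c t * faddeev k u t =
      2 * Complex.I * k * (1 - faddeev k u x) - deriv (faddeev k u) x := by
  have hlim := (hu.tendsto_deriv_faddeev hq).add
    (Tendsto.const_mul (2 * Complex.I * k) (f := faddeev k u) hu.2)
  rw [← integral_const_mul, (hu.1.isACPrimitive_deriv_faddeev_add
    hq.locallyIntegrable).integral_Ioi_eq_sub hlim
      ((hu.integrableOn_qfun_mul_faddeev hq x).const_mul _)]
  ring

theorem integral_Ioi_exp_mul_qfun_mul_faddeev (hu : IsJostPlus c k u) (hq : Integrable (qfun c))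
    (hk : 0 ≤ k.im) (x : ℝ) :
    k ^ 2 * ∫ t in Set.Ioi x, Complex.exp (2 * Complex.I * k * t) * (qfun c t * faddeev k u t) =
      -(Complex.exp (2 * Complex.I * k * x) * deriv (faddeev k u) x) := by
  have hlim : Tendsto (fun x : ℝ ↦ Complex.exp (2 * Complex.I * k * x) * deriv (faddeev k u) x)
      atTop (𝓝 0) :=
    isBoundedUnder_le_mul_tendsto_zero
      (isBoundedUnder_of_eventually_le ((eventually_ge_atTop 0).mono fun x hx ↦
        antitone_norm_exp_two_I_mul hk hx)) (hu.tendsto_deriv_faddeev hq)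
  rw [← integral_const_mul, (hu.1.isACPrimitive_exp_mul_deriv_faddeev
    hq.locallyIntegrable).integral_Ioi_eq_sub hlim
      ((hu.integrableOn_exp_mul_qfun_mul_faddeev hq hk x).const_mul _), zero_sub]

theorem norm_deriv_faddeev_le (hu : IsJostPlus c k u) (hq : Integrable (qfun c))
    (hk : 0 ≤ k.im) (x : ℝ) :
    ‖deriv (faddeev k u) x‖ ≤ ‖k‖ ^ 2 * ∫ t in Set.Ioi x, |qfun c t| * ‖faddeev k u t‖ := by
  set e := fun t : ℝ ↦ Complex.exp (2 * Complex.I * k * t)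
  have hint := hu.integrableOn_qfun_mul_faddeev hq x
  have hbound : ‖∫ t in Set.Ioi x, e t * (qfun c t * faddeev k u t)‖ ≤
      ∫ t in Set.Ioi x, ‖e x‖ * ‖(qfun c t : ℂ) * faddeev k u t‖ := by
    refine norm_integral_le_of_norm_le (hint.norm.const_mul _) ?_
    filter_upwards [ae_restrict_mem measurableSet_Ioi] with t ht
    rw [norm_mul]
    gcongr
    exact antitone_norm_exp_two_I_mul hk ht.le
  have heq := congrArg norm (hu.integral_Ioi_exp_mul_qfun_mul_faddeev hq hk x)
  rw [norm_mul, norm_pow, norm_neg, norm_mul] at heq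
  simp only [integral_const_mul, norm_mul, Complex.norm_real, Real.norm_eq_abs] at hbound
  refine le_of_mul_le_mul_left ?_ (norm_pos_iff.2 (Complex.exp_ne_zero (2 * Complex.I * k * x)))
  calc _ = ‖k‖ ^ 2 * ‖∫ t in Set.Ioi x, e t * (qfun c t * faddeev k u t)‖ := heq.symm
    _ ≤ ‖k‖ ^ 2 * (‖e x‖ * ∫ t in Set.Ioi x, |qfun c t| * ‖faddeev k u t‖) := by gcongr
    _ = _ := mul_left_comm _ _ _

theorem norm_faddeev_sub_one_le (hu : IsJostPlus c k u) (hq : Integrable (qfun c))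
    (hk : 0 ≤ k.im) (hk₀ : k ≠ 0) (x : ℝ) :
    ‖faddeev k u x - 1‖ ≤ ‖k‖ * ∫ t in Set.Ioi x, |qfun c t| * ‖faddeev k u t‖ := by
  set J := ∫ t in Set.Ioi x, |qfun c t| * ‖faddeev k u t‖
  have hJ : ‖∫ t in Set.Ioi x, (qfun c t : ℂ) * faddeev k u t‖ ≤ J := by
    simpa only [norm_mul, Complex.norm_real, Real.norm_eq_abs] using
      norm_integral_le_integral_norm (μ := volume.restrict (Set.Ioi x))
        fun t ↦ (qfun c t : ℂ) * faddeev k u t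
  have heq : 2 * Complex.I * k * (1 - faddeev k u x) =
      k ^ 2 * (∫ t in Set.Ioi x, qfun c t * faddeev k u t) + deriv (faddeev k u) x := by
    rw [hu.integral_Ioi_qfun_mul_faddeev hq, sub_add_cancel]
  refine le_of_mul_le_mul_left ?_ (mul_pos two_pos (norm_pos_iff.2 hk₀))
  calc 2 * ‖k‖ * ‖faddeev k u x - 1‖ = ‖2 * Complex.I * k * (1 - faddeev k u x)‖ := by
        simp [norm_sub_rev]
    _ ≤ ‖k‖ ^ 2 * J + ‖k‖ ^ 2 * J := by
        rw [heq]
        refine (norm_add_le _ _).trans (add_le_add ?_ (hu.norm_deriv_faddeev_le hq hk x))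
        rw [norm_mul, norm_pow]
        gcongr
    _ = 2 * ‖k‖ * (‖k‖ * J) := by ring

theorem norm_mul_integral_Ioi_le (hu : IsJostPlus c k u) (hq : Integrable (qfun c))
    (hk : 0 ≤ k.im) (hk₀ : k ≠ 0) (x : ℝ) :
    ‖k‖ * ∫ t in Set.Ioi x, |qfun c t| * ‖faddeev k u t‖ ≤
      Real.exp (‖k‖ * ∫ t, |qfun c t|) - 1 := by
  have hint : ∀ x, IntegrableOn (fun t ↦ ‖k‖ * |qfun c t| * ‖faddeev k u t‖) (Set.Ioi x) :=
    fun x ↦ by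
      simpa only [IntegrableOn, norm_mul, Complex.norm_real, Real.norm_eq_abs, mul_assoc] using
        (hu.integrableOn_qfun_mul_faddeev hq x).norm.const_mul ‖k‖
  have h := one_add_integral_Ioi_le_exp (hq.abs.const_mul ‖k‖) (fun _ ↦ by positivity) hint
    (fun y ↦ by
      simp only [mul_assoc, integral_const_mul]
      calc ‖faddeev k u y‖ ≤ ‖(1 : ℂ)‖ + ‖faddeev k u y - 1‖ := norm_le_insert' _ _
        _ ≤ _ := by
          rw [norm_one]
          gcongr
          exact hu.norm_faddeev_sub_one_le hq hk hk₀ y) x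
  simp only [mul_assoc, integral_const_mul] at h
  refine le_sub_iff_add_le'.2 (h.trans (Real.exp_le_exp.2 ?_))
  exact mul_le_mul_of_nonneg_left
    (setIntegral_le_integral hq.abs (Eventually.of_forall fun _ ↦ abs_nonneg _)) (norm_nonneg k)

theorem norm_faddeev_sub_one_le_exp_sub_one (hu : IsJostPlus c k u) (hq : Integrable (qfun c))
    (hk : 0 ≤ k.im) (hk₀ : k ≠ 0) (x : ℝ) :
    ‖faddeev k u x - 1‖ ≤ Real.exp (‖k‖ * ∫ t, |qfun c t|) - 1 :=
  (hu.norm_faddeev_sub_one_le hq hk hk₀ x).trans (hu.norm_mul_integral_Ioi_le hq hk hk₀ x)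

theorem norm_deriv_faddeev_le_mul_exp_sub_one (hu : IsJostPlus c k u) (hq : Integrable (qfun c))
    (hk : 0 ≤ k.im) (hk₀ : k ≠ 0) (x : ℝ) :
    ‖deriv (faddeev k u) x‖ ≤ ‖k‖ * (Real.exp (‖k‖ * ∫ t, |qfun c t|) - 1) := by
  refine (hu.norm_deriv_faddeev_le hq hk x).trans ?_
  rw [sq, mul_assoc]
  exact mul_le_mul_of_nonneg_left (hu.norm_mul_integral_Ioi_le hq hk hk₀ x) (norm_nonneg k)

theorem norm_apply_zero_sub_one_le (hu : IsJostPlus c k u) (hq : Integrable (qfun c))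
    (hk : 0 ≤ k.im) (hk₀ : k ≠ 0) :
    ‖u 0 - 1‖ ≤ Real.exp (‖k‖ * ∫ t, |qfun c t|) - 1 := by
  simpa [faddeev] using hu.norm_faddeev_sub_one_le_exp_sub_one hq hk hk₀ 0

theorem norm_deriv_zero_sub_le (hu : IsJostPlus c k u) (hq : Integrable (qfun c))
    (hk : 0 ≤ k.im) (hk₀ : k ≠ 0) :
    ‖deriv u 0 - Complex.I * k * u 0‖ ≤ ‖k‖ * (Real.exp (‖k‖ * ∫ t, |qfun c t|) - 1) := by
  simpa [deriv_faddeev hu.differentiable] using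
    hu.norm_deriv_faddeev_le_mul_exp_sub_one hq hk hk₀ 0

theorem two_I_mul_one_sub_apply_zero (hu : IsJostPlus c k u) (hq : Integrable (qfun c))
    (hk : 0 ≤ k.im) (hk₀ : k ≠ 0) :
    2 * Complex.I * (1 - u 0) = k * ∫ t : ℝ in Set.Ioi 0,
      (1 - Complex.exp (2 * Complex.I * k * t)) * (qfun c t * faddeev k u t) := by
  have hA := hu.integral_Ioi_qfun_mul_faddeev hq 0
  have hB := hu.integral_Ioi_exp_mul_qfun_mul_faddeev hq hk 0
  have hm : faddeev k u 0 = u 0 := by simp [faddeev]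
  rw [Complex.ofReal_zero, mul_zero, Complex.exp_zero, one_mul] at hB
  simp only [sub_mul, one_mul]
  rw [integral_sub (hu.integrableOn_qfun_mul_faddeev hq 0)
    (hu.integrableOn_exp_mul_qfun_mul_faddeev hq hk 0)]
  refine mul_left_cancel₀ hk₀ ?_
  linear_combination hB - hA + 2 * Complex.I * k * hm

theorem eventually_norm_faddeev_le {U : ℂ → ℝ → ℂ} (hU : ∀ k : ℝ, IsJostPlus c k (U k))
    (hq : Integrable (qfun c)) :
    ∀ᶠ k : ℝ in 𝓝[≠] 0, ∀ x, ‖faddeev k (U k) x‖ ≤ Real.exp (∫ t, |qfun c t|) := by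
  filter_upwards [self_mem_nhdsWithin,
    nhdsWithin_le_nhds (Metric.closedBall_mem_nhds (0 : ℝ) one_pos)] with k hk₀ hk x
  have hN : 0 ≤ ∫ t, |qfun c t| := integral_nonneg fun _ ↦ abs_nonneg _
  have hk₁ : ‖(k : ℂ)‖ ≤ 1 := by simpa using hk
  calc ‖faddeev k (U k) x‖ ≤ ‖(1 : ℂ)‖ + ‖faddeev k (U k) x - 1‖ := norm_le_insert' _ _
    _ ≤ Real.exp (‖(k : ℂ)‖ * ∫ t, |qfun c t|) := by
      rw [norm_one, ← le_sub_iff_add_le']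
      exact (hU k).norm_faddeev_sub_one_le_exp_sub_one hq (Complex.ofReal_im k).ge
        (Complex.ofReal_ne_zero.2 hk₀) x
    _ ≤ _ := Real.exp_le_exp.2 (mul_le_of_le_one_left hN hk₁)

theorem tendsto_integral_one_sub_exp_mul {U : ℂ → ℝ → ℂ} (hU : ∀ k : ℝ, IsJostPlus c k (U k))
    (hq : Integrable (qfun c)) :
    Tendsto (fun k : ℝ ↦ ∫ t : ℝ in Set.Ioi 0,
      (1 - Complex.exp (2 * Complex.I * k * t)) * (qfun c t * faddeev k (U k) t))
      (𝓝[≠] 0) (𝓝 0) := by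
  have hm := eventually_norm_faddeev_le hU hq
  rw [← integral_zero ℝ ℂ (μ := volume.restrict (Set.Ioi 0))]
  refine tendsto_integral_filter_of_dominated_convergence
    (fun t ↦ 2 * (|qfun c t| * Real.exp (∫ t, |qfun c t|))) (Eventually.of_forall fun k ↦ ?_) ?_
    ((hq.abs.mul_const _).const_mul 2).integrableOn (Eventually.of_forall fun t ↦ ?_)
  · exact AEStronglyMeasurable.mul (by fun_prop)
      ((hU k).integrableOn_qfun_mul_faddeev hq 0).aestronglyMeasurable
  · filter_upwards [hm] with k hk
    refine Eventually.of_forall fun t ↦ ?_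
    have hexp : ‖1 - Complex.exp (2 * Complex.I * k * t)‖ ≤ 2 := by
      refine (norm_sub_le _ _).trans_eq ?_
      rw [Complex.norm_exp, norm_one]
      norm_num
    rw [norm_mul, norm_mul, Complex.norm_real, Real.norm_eq_abs]
    gcongr
    exact hk t
  · refine Tendsto.zero_mul_isBoundedUnder_le ?_ (isBoundedUnder_of_eventually_le
      (a := |qfun c t| * Real.exp (∫ t, |qfun c t|)) ?_)
    · have hcont : Continuous fun k : ℝ ↦ 1 - Complex.exp (2 * Complex.I * k * t) := by fun_prop
      simpa using (hcont.tendsto 0).mono_left nhdsWithin_le_nhds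
    · filter_upwards [hm] with k hk
      rw [Function.comp_apply, norm_mul, Complex.norm_real, Real.norm_eq_abs]
      gcongr
      exact hk t

theorem isLittleO_apply_zero_sub_one {U : ℂ → ℝ → ℂ} (hU : ∀ k : ℝ, IsJostPlus c k (U k))
    (hq : Integrable (qfun c)) :
    (fun k : ℝ ↦ U k 0 - 1) =o[𝓝[≠] 0] fun k : ℝ ↦ (k : ℂ) := by
  have hI := (tendsto_integral_one_sub_exp_mul hU hq).mul_const (Complex.I / 2)
  rw [zero_mul, ← Asymptotics.isLittleO_one_iff ℂ] at hI
  refine ((Asymptotics.isBigO_refl (fun k : ℝ ↦ (k : ℂ)) _).mul_isLittleO hI).congr' ?_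
    (Eventually.of_forall fun k ↦ mul_one _)
  filter_upwards [self_mem_nhdsWithin] with k hk
  have h := (hU k).two_I_mul_one_sub_apply_zero hq (Complex.ofReal_im k).ge
    (Complex.ofReal_ne_zero.2 hk)
  linear_combination -Complex.I / 2 * h + (1 - U k 0) * Complex.I_sq

end IsJostPlus

end Jost

section Reflection

variable {c : ℝ → ℝ} {k : ℂ} {u : ℝ → ℂ}

theorem IsJostMinus.comp_neg (hu : IsJostMinus c k u) :
    IsJostPlus (fun x ↦ c (-x)) k fun x ↦ u (-x) := by
  refine ⟨⟨hu.1.1.comp contDiff_neg, fun a b ↦ ?_⟩, ?_⟩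
  · rw [deriv_comp_neg, deriv_comp_neg, hu.1.2 (-a) (-b), intervalIntegral.integral_symm,
      intervalIntegral.integral_comp_neg fun x ↦ -(k ^ 2 / (c x : ℂ) ^ 2) * u x]
    ring
  · refine (hu.2.comp tendsto_neg_atTop_atBot).congr fun x ↦ ?_
    simp only [Function.comp_apply, Complex.ofReal_neg, mul_neg]

theorem integrable_qfun_comp_neg (hq : Integrable (qfun c)) :
    Integrable (qfun fun x ↦ c (-x)) :=
  Integrable.comp_neg hq

theorem integral_abs_qfun_comp_neg (c : ℝ → ℝ) :
    ∫ x, |qfun (fun x ↦ c (-x)) x| = ∫ x, |qfun c x| :=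
  integral_neg_eq_self (fun x ↦ |qfun c x|) volume

theorem ae_pos_comp_neg (hc : ∀ᵐ x, 0 < c x) : ∀ᵐ x, 0 < c (-x) :=
  (Measure.measurePreserving_neg volume).quasiMeasurePreserving.ae hc

end Reflection

section Flux

variable {c : ℝ → ℝ} {k : ℂ} {u : ℝ → ℂ}

theorem abs_Qfun_le_abs_qfun {x : ℝ} (hc : 0 < c x) : |Qfun c x| ≤ |qfun c x| := by
  have hfactor : qfun c x = Qfun c x * (1 + 1 / c x) := by rw [qfun, Qfun]; ring
  have hone : 1 ≤ |1 + 1 / c x| := by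
    rw [abs_of_pos (by positivity), le_add_iff_nonneg_right]; positivity
  rw [hfactor, abs_mul]
  exact le_mul_of_one_le_right (abs_nonneg _) hone

theorem integrable_Qfun (hc : ∀ᵐ x, 0 < c x) (hq : Integrable (qfun c)) :
    Integrable (Qfun c) := by
  have hsqrt : (fun x ↦ 1 - √(1 - qfun c x)) =ᵐ[volume] Qfun c := by
    filter_upwards [hc] with x hx
    rw [qfun, Qfun, sub_sub_cancel, ← one_div_pow, Real.sqrt_sq (by positivity)]
  refine hq.mono (AEStronglyMeasurable.congr ?_ hsqrt) (hc.mono fun x ↦ abs_Qfun_le_abs_qfun)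
  exact aestronglyMeasurable_const.sub (Real.continuous_sqrt.comp_aestronglyMeasurable
    (aestronglyMeasurable_const.sub hq.aestronglyMeasurable))

/-- The energy flux `Im (k̄ ū u')` of a solution `u` at frequency `k`. Multiplication by `k̄` makes
it nonincreasing for all `k` in the closed upper half-plane. -/
def flux (k : ℂ) (u : ℝ → ℂ) (x : ℝ) : ℝ := (conj k * (conj (u x) * deriv u x)).im

theorem SolvesHelmholtz.isACPrimitive_flux (hu : SolvesHelmholtz c k u)
    (hq : LocallyIntegrable (qfun c)) :
    IsACPrimitive (flux k u) fun x ↦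
      -(k.im * (‖deriv u x‖ ^ 2 + (‖k‖ * ‖u x‖ * (1 / c x)) ^ 2)) := by
  have hconj := (IsACPrimitive.of_contDiff hu.1).clm_comp (Complex.conjCLE : ℂ →L[ℝ] ℂ)
  refine (((hconj.mul (hu.isACPrimitive_deriv hq)).clm_comp (.mul ℝ ℂ (conj k))).clm_comp
    Complex.imCLM).congr_ae (Eventually.of_forall fun x ↦ ?_)
  have hterms : conj k * (conj (deriv u x) * deriv u x +
      conj (u x) * (-(k ^ 2 / (c x : ℂ) ^ 2) * u x)) =
      ((‖deriv u x‖ ^ 2 : ℝ) : ℂ) * conj k - (((‖k‖ * ‖u x‖ * (1 / c x)) ^ 2 : ℝ) : ℂ) * k := by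
    push_cast
    rw [← Complex.conj_mul', mul_pow, mul_pow, ← Complex.conj_mul', ← Complex.conj_mul']
    ring
  refine (congrArg Complex.im hterms).trans ?_
  rw [Complex.sub_im, Complex.im_ofReal_mul, Complex.im_ofReal_mul, Complex.conj_im]
  ring

theorem flux_le (k : ℂ) (u : ℝ → ℂ) (x : ℝ) : flux k u x ≤ ‖k‖ * ‖u x‖ * ‖deriv u x‖ := by
  refine (Complex.im_le_norm _).trans_eq ?_
  rw [norm_mul, norm_mul, RCLike.norm_conj, RCLike.norm_conj, mul_assoc]

theorem flux_comp_neg (k : ℂ) (u : ℝ → ℂ) (x : ℝ) :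
    flux k (fun x ↦ u (-x)) x = -flux k u (-x) := by
  simp only [flux, deriv_comp_neg, mul_neg, Complex.neg_im]

theorem SolvesHelmholtz.flux_mul_exp_le (hu : SolvesHelmholtz c k u) (hc : ∀ᵐ x, 0 < c x)
    (hq : Integrable (qfun c)) (hk : 0 ≤ k.im) {x : ℝ} (hx : 0 ≤ x) :
    Real.exp (2 * k.im * x) * flux k u x ≤
      flux k u 0 * Real.exp (2 * k.im * ∫ t in 0..x, Qfun c t) := by
  have hQ := integrable_Qfun hc hq
  have hβ : LocallyIntegrable fun t ↦ 2 * k.im * (Qfun c t - 1) :=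
    locallyIntegrable_continuous_mul continuous_const
      (hQ.locallyIntegrable.sub (locallyIntegrable_const 1))
  have hgron := (hu.isACPrimitive_flux hq.locallyIntegrable).le_mul_exp_integral hβ (by
    filter_upwards [hc] with t ht
    have hc' : 0 ≤ 1 / c t := by positivity
    -- AM-GM for `‖u'‖` and `‖k‖ ‖u‖ / c`, whose product bounds the flux over `c`.
    have hamgm : 2 * (1 / c t) * flux k u t ≤
        ‖deriv u t‖ ^ 2 + (‖k‖ * ‖u t‖ * (1 / c t)) ^ 2 := by
      nlinarith [mul_le_mul_of_nonneg_left (flux_le k u t) hc',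
        sq_nonneg (‖deriv u t‖ - ‖k‖ * ‖u t‖ * (1 / c t))]
    have h := mul_le_mul_of_nonneg_left hamgm hk
    rw [Qfun]
    linarith) hx
  rw [intervalIntegral.integral_const_mul, intervalIntegral.integral_sub hQ.intervalIntegrable
    intervalIntegrable_const, intervalIntegral.integral_const, sub_zero, smul_eq_mul, mul_one,
    mul_sub, Real.exp_sub, mul_div_assoc', le_div_iff₀ (Real.exp_pos _)] at hgron
  rwa [mul_comm]

namespace IsJostPlus

theorem tendsto_exp_mul_flux (hu : IsJostPlus c k u) (hq : Integrable (qfun c)) :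
    Tendsto (fun x ↦ Real.exp (2 * k.im * x) * flux k u x) atTop (𝓝 (‖k‖ ^ 2)) := by
  have hm : Tendsto (faddeev k u) atTop (𝓝 1) := hu.2
  have hlim := (Complex.continuous_im.tendsto _).comp (Tendsto.const_mul (conj k)
    (((Complex.continuous_conj.tendsto _).comp hm).mul
      ((hu.tendsto_deriv_faddeev hq).add (hm.const_mul (Complex.I * k)))))
  have hval : (conj k * (conj 1 * (0 + Complex.I * k * 1))).im = ‖k‖ ^ 2 := by
    rw [show conj k * (conj 1 * (0 + Complex.I * k * 1)) = conj k * k * Complex.I by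
      rw [map_one]; ring, Complex.conj_mul', ← Complex.ofReal_pow, Complex.im_ofReal_mul,
      Complex.I_im, mul_one]
  rw [hval] at hlim
  refine hlim.congr fun x ↦ ?_
  have hexp : conj (Complex.exp (-(Complex.I * k * x))) * Complex.exp (-(Complex.I * k * x)) =
      (Real.exp (2 * k.im * x) : ℂ) := by
    rw [Complex.conj_mul', Complex.norm_exp, ← Complex.ofReal_pow, ← Real.exp_nat_mul]
    congr 2
    simp
    ring
  rw [flux, ← Complex.im_ofReal_mul, ← hexp]
  simp only [Function.comp_apply, deriv_faddeev hu.differentiable, faddeev, map_mul]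
  congr 1
  ring

theorem sq_norm_le_flux_mul_exp (hu : IsJostPlus c k u) (hc : ∀ᵐ x, 0 < c x)
    (hq : Integrable (qfun c)) (hk : 0 ≤ k.im) :
    ‖k‖ ^ 2 ≤ flux k u 0 * Real.exp (2 * (‖k‖ * ∫ t, |qfun c t|)) := by
  have hQ := integrable_Qfun hc hq
  have hlim : ‖k‖ ^ 2 ≤ flux k u 0 * Real.exp (2 * k.im * ∫ t in Set.Ioi 0, Qfun c t) :=
    le_of_tendsto_of_tendsto (hu.tendsto_exp_mul_flux hq)
      (((intervalIntegral_tendsto_integral_Ioi 0 hQ.integrableOn tendsto_id).const_mul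
        (2 * k.im)).rexp.const_mul (flux k u 0))
      ((eventually_ge_atTop 0).mono fun x hx ↦ hu.1.flux_mul_exp_le hc hq hk hx)
  have hflux : 0 ≤ flux k u 0 :=
    nonneg_of_mul_nonneg_left ((sq_nonneg _).trans hlim) (Real.exp_pos _)
  have hQq : ∫ t in Set.Ioi 0, Qfun c t ≤ ∫ t, |qfun c t| := calc
    _ ≤ ∫ t in Set.Ioi 0, |qfun c t| := by
      refine setIntegral_mono_ae hQ.integrableOn hq.abs.integrableOn (hc.mono fun t ht ↦ ?_)
      exact (le_abs_self _).trans (abs_Qfun_le_abs_qfun ht)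
    _ ≤ _ := setIntegral_le_integral hq.abs (Eventually.of_forall fun _ ↦ abs_nonneg _)
  refine hlim.trans (mul_le_mul_of_nonneg_left (Real.exp_le_exp.2 ?_) hflux)
  rw [mul_assoc]
  have hN : 0 ≤ ∫ t, |qfun c t| := integral_nonneg fun _ ↦ abs_nonneg _
  exact mul_le_mul_of_nonneg_left ((mul_le_mul_of_nonneg_left hQq hk).trans
    (mul_le_mul_of_nonneg_right (Complex.im_le_norm k) hN)) two_pos.le

theorem flux_zero_of_real {k : ℝ} (hu : IsJostPlus c k u) (hq : Integrable (qfun c)) :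
    flux k u 0 = k ^ 2 := by
  have hlim : Tendsto (flux k u) atTop (𝓝 (k ^ 2)) := by
    simpa using hu.tendsto_exp_mul_flux hq
  have hF := hu.1.isACPrimitive_flux hq.locallyIntegrable
  simp only [Complex.ofReal_im, zero_mul, neg_zero] at hF
  have h := hF.integral_Ioi_eq_sub hlim (x := 0) integrableOn_zero
  rw [integral_zero] at h
  linarith

end IsJostPlus

theorem IsJostMinus.flux_zero_of_real {k : ℝ} (hu : IsJostMinus c k u)
    (hq : Integrable (qfun c)) : flux k u 0 = -k ^ 2 := by
  have h := hu.comp_neg.flux_zero_of_real (integrable_qfun_comp_neg hq)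
  rw [flux_comp_neg, neg_zero] at h
  linarith

end Flux

section NormalizedWronskian

theorem norm_wronskian_sub_le {k u u' v v' : ℂ} {ε : ℝ} (hu : ‖u - 1‖ ≤ ε) (hv : ‖v - 1‖ ≤ ε)
    (hu' : ‖u' - Complex.I * k * u‖ ≤ ‖k‖ * ε) (hv' : ‖v' - Complex.I * k * v‖ ≤ ‖k‖ * ε) :
    ‖u' * v + u * v' - 2 * Complex.I * k‖ ≤ ‖2 * Complex.I * k‖ * (2 * ((1 + ε) ^ 2 - 1)) := by
  have hε : 0 ≤ ε := (norm_nonneg _).trans hu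
  have hule : ‖u‖ ≤ 1 + ε :=
    (norm_le_insert' u 1).trans (add_le_add norm_one.le hu)
  have hvle : ‖v‖ ≤ 1 + ε :=
    (norm_le_insert' v 1).trans (add_le_add norm_one.le hv)
  calc ‖u' * v + u * v' - 2 * Complex.I * k‖
      = ‖2 * Complex.I * k * ((u - 1) * v + (v - 1)) + (u' - Complex.I * k * u) * v +
          u * (v' - Complex.I * k * v)‖ := by congr 1; ring
    _ ≤ ‖2 * Complex.I * k‖ * (ε * (1 + ε) + ε) + ‖k‖ * ε * (1 + ε) + (1 + ε) * (‖k‖ * ε) := by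
      refine norm_add₃_le.trans ?_
      simp only [norm_mul (2 * Complex.I * k), norm_mul (u' - _), norm_mul u]
      gcongr
      refine (norm_add_le _ _).trans ?_
      rw [norm_mul]
      gcongr
    _ ≤ ‖2 * Complex.I * k‖ * (2 * ((1 + ε) ^ 2 - 1)) := by
      simp only [norm_mul, Complex.norm_I, Complex.norm_ofNat, mul_one]
      linarith [mul_nonneg (norm_nonneg k) hε]

theorem mul_sq_norm_add_mul_sq_norm_le (k u u' v v' : ℂ) :
    (conj k * (conj u * u')).im * ‖v‖ ^ 2 + (conj k * (conj v * v')).im * ‖u‖ ^ 2 ≤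
      ‖k‖ * ‖u‖ * ‖v‖ * ‖u' * v + u * v'‖ := by
  have hre : conj k * conj u * conj v * (u' * v + u * v') =
      ((‖v‖ ^ 2 : ℝ) : ℂ) * (conj k * (conj u * u')) +
        ((‖u‖ ^ 2 : ℝ) : ℂ) * (conj k * (conj v * v')) := by
    push_cast
    rw [← Complex.conj_mul', ← Complex.conj_mul']
    ring
  calc _ = (conj k * conj u * conj v * (u' * v + u * v')).im := by
        rw [hre, Complex.add_im, Complex.im_ofReal_mul, Complex.im_ofReal_mul]
        ring
    _ ≤ ‖conj k * conj u * conj v * (u' * v + u * v')‖ := Complex.im_le_norm _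
    _ = _ := by simp only [norm_mul, RCLike.norm_conj]

theorem two_mul_norm_le_norm_wronskian_mul {k u u' v v' : ℂ} {E : ℝ} (hk : k ≠ 0) (hE : 0 ≤ E)
    (hu : ‖k‖ ^ 2 ≤ (conj k * (conj u * u')).im * E)
    (hv : ‖k‖ ^ 2 ≤ (conj k * (conj v * v')).im * E) :
    2 * ‖k‖ ≤ ‖u' * v + u * v'‖ * E := by
  have hu₀ : u ≠ 0 := by rintro rfl; simp [hk] at hu
  have hv₀ : v ≠ 0 := by rintro rfl; simp [hk] at hv
  have hpos : 0 < ‖k‖ * ‖u‖ * ‖v‖ := by positivity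
  refine le_of_mul_le_mul_left ?_ hpos
  calc ‖k‖ * ‖u‖ * ‖v‖ * (2 * ‖k‖) = ‖k‖ ^ 2 * (2 * ‖v‖ * ‖u‖) := by ring
    _ ≤ ‖k‖ ^ 2 * (‖v‖ ^ 2 + ‖u‖ ^ 2) := by gcongr; exact two_mul_le_add_sq _ _
    _ ≤ (conj k * (conj u * u')).im * E * ‖v‖ ^ 2 +
        (conj k * (conj v * v')).im * E * ‖u‖ ^ 2 := by rw [mul_add]; gcongr
    _ = ((conj k * (conj u * u')).im * ‖v‖ ^ 2 +
        (conj k * (conj v * v')).im * ‖u‖ ^ 2) * E := by ring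
    _ ≤ ‖k‖ * ‖u‖ * ‖v‖ * ‖u' * v + u * v'‖ * E := by
      gcongr; exact mul_sq_norm_add_mul_sq_norm_le k u u' v v'
    _ = _ := mul_assoc _ _ _

variable {c : ℝ → ℝ} {U V : ℂ → ℝ → ℂ} {k : ℂ}

/-- The Wronskian of the Jost solutions `U k` and `V k` at `x = 0`, divided by its value `2ik` in
the homogeneous medium. At `k = 0` it takes its limiting value `1`. -/
def normalizedWronskian (U V : ℂ → ℝ → ℂ) (k : ℂ) : ℂ :=
  if k = 0 then 1 else (deriv (U k) 0 * V k 0 - U k 0 * deriv (V k) 0) / (2 * Complex.I * k)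

@[simp]
theorem normalizedWronskian_zero (U V : ℂ → ℝ → ℂ) : normalizedWronskian U V 0 = 1 :=
  if_pos rfl

theorem normalizedWronskian_of_ne_zero (U V : ℂ → ℝ → ℂ) (hk : k ≠ 0) :
    normalizedWronskian U V k =
      (deriv (U k) 0 * V k 0 - U k 0 * deriv (V k) 0) / (2 * Complex.I * k) :=
  if_neg hk

theorem norm_normalizedWronskian_sub_one_le (hU : IsJostPlus c k (U k))
    (hV : IsJostMinus c k (V k)) (hq : Integrable (qfun c)) (hk : 0 ≤ k.im) :
    ‖normalizedWronskian U V k - 1‖ ≤ 2 * (Real.exp (2 * (‖k‖ * ∫ t, |qfun c t|)) - 1) := by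
  rcases eq_or_ne k 0 with rfl | hk₀
  · simp
  have hne : 2 * Complex.I * k ≠ 0 := by simp [hk₀]
  have hq' := integrable_qfun_comp_neg hq
  have hv := hV.comp_neg.norm_apply_zero_sub_one_le hq' hk hk₀
  have hv' := hV.comp_neg.norm_deriv_zero_sub_le hq' hk hk₀
  rw [integral_abs_qfun_comp_neg] at hv hv'
  simp only [deriv_comp_neg, neg_zero] at hv hv'
  have h := norm_wronskian_sub_le (hU.norm_apply_zero_sub_one_le hq hk hk₀) hv
    (hU.norm_deriv_zero_sub_le hq hk hk₀) hv'
  rw [add_sub_cancel, ← Real.exp_nat_mul, Nat.cast_ofNat, mul_neg, ← sub_eq_add_neg] at h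
  rwa [normalizedWronskian_of_ne_zero U V hk₀, div_sub_one hne, norm_div,
    div_le_iff₀' (norm_pos_iff.2 hne)]

theorem one_le_norm_normalizedWronskian_mul_exp (hU : IsJostPlus c k (U k))
    (hV : IsJostMinus c k (V k)) (hc : ∀ᵐ x, 0 < c x) (hq : Integrable (qfun c))
    (hk : 0 ≤ k.im) :
    1 ≤ ‖normalizedWronskian U V k‖ * Real.exp (2 * (‖k‖ * ∫ t, |qfun c t|)) := by
  rcases eq_or_ne k 0 with rfl | hk₀
  · simp
  have hv := hV.comp_neg.sq_norm_le_flux_mul_exp (ae_pos_comp_neg hc)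
    (integrable_qfun_comp_neg hq) hk
  simp only [integral_abs_qfun_comp_neg, flux, deriv_comp_neg, neg_zero] at hv
  have h := two_mul_norm_le_norm_wronskian_mul hk₀ (Real.exp_pos _).le
    (hU.sq_norm_le_flux_mul_exp hc hq hk) hv
  rw [mul_neg, ← sub_eq_add_neg] at h
  rw [normalizedWronskian_of_ne_zero U V hk₀, norm_div, div_mul_eq_mul_div,
    one_le_div (norm_pos_iff.2 (by simp [hk₀]))]
  simpa using h

theorem continuousOn_normalizedWronskian (hU : ∀ k : ℂ, 0 ≤ k.im → IsJostPlus c k (U k))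
    (hV : ∀ k : ℂ, 0 ≤ k.im → IsJostMinus c k (V k)) (hUreg : JostFamilyRegular U)
    (hVreg : JostFamilyRegular V) (hq : Integrable (qfun c)) :
    ContinuousOn (normalizedWronskian U V) {k | 0 ≤ k.im} := by
  intro k hk
  rcases eq_or_ne k 0 with rfl | hk₀
  · have hbound : Continuous fun k : ℂ ↦ 2 * (Real.exp (2 * (‖k‖ * ∫ t, |qfun c t|)) - 1) := by
      fun_prop
    have hlim := (hbound.tendsto 0).mono_left (nhdsWithin_le_nhds (s := {k : ℂ | 0 ≤ k.im}))
    simp only [norm_zero, zero_mul, mul_zero, Real.exp_zero, sub_self] at hlim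
    rw [ContinuousWithinAt, normalizedWronskian_zero, tendsto_iff_norm_sub_tendsto_zero]
    refine squeeze_zero' (Eventually.of_forall fun _ ↦ norm_nonneg _) ?_ hlim
    filter_upwards [self_mem_nhdsWithin] with z hz
      using norm_normalizedWronskian_sub_one_le (hU z hz) (hV z hz) hq hz
  · obtain ⟨-, hUc, -, hUc'⟩ := hUreg 0
    obtain ⟨-, hVc, -, hVc'⟩ := hVreg 0
    refine ContinuousWithinAt.congr_of_eventuallyEq (((((hUc' k hk).mul (hVc k hk)).sub
      ((hUc k hk).mul (hVc' k hk))).div (by fun_prop) (by simp [hk₀])))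
      ?_ (normalizedWronskian_of_ne_zero U V hk₀)
    filter_upwards [eventually_nhdsWithin_of_eventually_nhds (isOpen_ne.eventually_mem hk₀)]
      with z hz using normalizedWronskian_of_ne_zero U V hz

theorem differentiableOn_normalizedWronskian (hUreg : JostFamilyRegular U)
    (hVreg : JostFamilyRegular V) :
    DifferentiableOn ℂ (normalizedWronskian U V) {k | 0 < k.im} := by
  obtain ⟨hU, -, hU', -⟩ := hUreg 0
  obtain ⟨hV, -, hV', -⟩ := hVreg 0
  have hne : ∀ z ∈ {k : ℂ | 0 < k.im}, z ≠ 0 := by rintro z hz rfl; simp at hz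
  exact (((hU'.mul hV).sub (hU.mul hV')).div (by fun_prop) fun z hz ↦ by simp [hne z hz]).congr
    fun z hz ↦ normalizedWronskian_of_ne_zero U V (hne z hz)

theorem isZeroFreeExpType_normalizedWronskian (hU : ∀ k : ℂ, 0 ≤ k.im → IsJostPlus c k (U k))
    (hV : ∀ k : ℂ, 0 ≤ k.im → IsJostMinus c k (V k)) (hUreg : JostFamilyRegular U)
    (hVreg : JostFamilyRegular V) (hc : ∀ᵐ x, 0 < c x) (hq : Integrable (qfun c)) :
    IsZeroFreeExpType (normalizedWronskian U V) := by
  have hlower := fun z hz ↦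
    one_le_norm_normalizedWronskian_mul_exp (hU z hz) (hV z hz) hc hq hz
  have hne : ∀ z : ℂ, 0 ≤ z.im → normalizedWronskian U V z ≠ 0 := by
    intro z hz h₀
    simpa [h₀] using (hlower z hz).trans_lt' one_pos
  refine ⟨continuousOn_normalizedWronskian hU hV hUreg hVreg hq,
    differentiableOn_normalizedWronskian hUreg hVreg, hne,
    Real.log 2 + 2 * ∫ t, |qfun c t|, fun z hz ↦ ?_⟩
  have hpos : 0 < ‖normalizedWronskian U V z‖ := norm_pos_iff.2 (hne z hz)
  have hN : 0 ≤ ∫ t, |qfun c t| := integral_nonneg fun _ ↦ abs_nonneg _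
  have hlog₂ : 0 ≤ Real.log 2 := Real.log_nonneg one_le_two
  set s := 2 * (‖z‖ * ∫ t, |qfun c t|)
  have hs : Real.log 2 + s ≤ (Real.log 2 + 2 * ∫ t, |qfun c t|) * (1 + ‖z‖) := by
    linarith [mul_nonneg hlog₂ (norm_nonneg z)]
  refine (abs_le.2 ⟨?_, ?_⟩ : _ ≤ Real.log 2 + s).trans hs
  · have h := Real.log_nonneg (hlower z hz)
    rw [Real.log_mul hpos.ne' (Real.exp_pos _).ne', Real.log_exp] at h
    linarith
  · have hupper : ‖normalizedWronskian U V z‖ ≤ 2 * Real.exp s := by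
      have h := norm_le_insert' (normalizedWronskian U V z) 1
      rw [norm_one] at h
      linarith [norm_normalizedWronskian_sub_one_le (hU z hz) (hV z hz) hq hz]
    rw [← Real.log_exp s, ← Real.log_mul two_ne_zero (Real.exp_pos _).ne']
    exact Real.log_le_log hpos hupper

end NormalizedWronskian

section Scattering

/-- `U` and `V` are the Jost solutions from `+∞` and `-∞` of the wave speed `c`, regular in the
frequency, and `T` and `R` are its transmission coefficient and its reflection coefficient `R₂`. -/
structure IsScatteringData (c : ℝ → ℝ) (U V : ℂ → ℝ → ℂ) (T R : ℝ → ℂ) : Prop where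
  plus : ∀ k : ℂ, 0 ≤ k.im → IsJostPlus c k (U k)
  minus : ∀ k : ℂ, 0 ≤ k.im → IsJostMinus c k (V k)
  regular_plus : JostFamilyRegular U
  regular_minus : JostFamilyRegular V
  wronskian : ∀ k : ℝ, k ≠ 0 → ∀ x : ℝ,
    T k * (deriv (U k) x * V k x - U k x * deriv (V k) x) = 2 * Complex.I * k
  connection : ∀ k : ℝ, k ≠ 0 → ∀ x : ℝ,
    U k x = (R k / T k) * V k x + (1 / T k) * conj (V k x)

theorem flux_mul_add_mul_conj {v : ℝ → ℂ} (hv : Differentiable ℝ v) (k : ℝ) (a b : ℂ) (x : ℝ) :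
    flux k (fun y ↦ a * v y + b * conj (v y)) x = (‖a‖ ^ 2 - ‖b‖ ^ 2) * flux k v x := by
  have hconj : HasDerivAt (fun y ↦ conj (v y)) (conj (deriv v x)) x :=
    Complex.conjCLE.hasFDerivAt.comp_hasDerivAt x (hv x).hasDerivAt
  have hderiv := (((hv x).hasDerivAt.const_mul a).fun_add (hconj.const_mul b)).deriv
  simp only [flux, hderiv, Complex.conj_ofReal, Complex.ofReal_re, Complex.ofReal_im,
    Complex.sq_norm, Complex.normSq_apply, map_add, map_mul, Complex.conj_conj, Complex.add_im,
    Complex.mul_im, Complex.add_re, Complex.mul_re, Complex.conj_re, Complex.conj_im]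
  ring

namespace IsScatteringData

variable {c : ℝ → ℝ} {U V : ℂ → ℝ → ℂ} {T R : ℝ → ℂ}

theorem transmission_ne_zero (h : IsScatteringData c U V T R) {k : ℝ} (hk : k ≠ 0) : T k ≠ 0 := by
  intro hT
  simpa [hT, hk] using h.wronskian k hk 0

theorem normalizedWronskian_eq (h : IsScatteringData c U V T R) {k : ℝ} (hk : k ≠ 0) :
    normalizedWronskian U V k = 1 / T k := by
  have hk' : (k : ℂ) ≠ 0 := Complex.ofReal_ne_zero.2 hk
  rw [normalizedWronskian_of_ne_zero U V hk', div_eq_div_iff (by simp [hk])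
    (h.transmission_ne_zero hk), one_mul, mul_comm, h.wronskian k hk 0]

theorem isZeroFreeExpType (h : IsScatteringData c U V T R) (hc : ∀ᵐ x, 0 < c x)
    (hq : Integrable (qfun c)) : IsZeroFreeExpType (normalizedWronskian U V) :=
  isZeroFreeExpType_normalizedWronskian h.plus h.minus h.regular_plus h.regular_minus hc hq

theorem sq_norm_add_sq_norm (h : IsScatteringData c U V T R) (hq : Integrable (qfun c)) {k : ℝ}
    (hk : k ≠ 0) : ‖T k‖ ^ 2 + ‖R k‖ ^ 2 = 1 := by
  have hT := norm_ne_zero_iff.2 (h.transmission_ne_zero hk)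
  have hU := h.plus k (Complex.ofReal_im k).ge
  have hV := h.minus k (Complex.ofReal_im k).ge
  have hflux := flux_mul_add_mul_conj (hV.1.1.differentiable one_ne_zero) k
    (R k / T k) (1 / T k) 0
  rw [← funext (h.connection k hk), hU.flux_zero_of_real hq, hV.flux_zero_of_real hq, norm_div,
    norm_div, norm_one] at hflux
  field_simp at hflux
  linarith

theorem isBigO_transmission (h : IsScatteringData c U V T R) (hq : Integrable (qfun c)) :
    T =O[𝓝[≠] 0] fun _ ↦ (1 : ℂ) := by
  refine Asymptotics.IsBigO.of_bound 1 ?_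
  filter_upwards [self_mem_nhdsWithin] with k hk
  rw [norm_one, one_mul]
  nlinarith [h.sq_norm_add_sq_norm hq hk, sq_nonneg ‖R k‖, norm_nonneg (T k)]

theorem isBigO_reflection (h : IsScatteringData c U V T R) (hq : Integrable (qfun c)) :
    R =O[𝓝[≠] 0] fun _ ↦ (1 : ℂ) := by
  refine Asymptotics.IsBigO.of_bound 1 ?_
  filter_upwards [self_mem_nhdsWithin] with k hk
  rw [norm_one, one_mul]
  nlinarith [h.sq_norm_add_sq_norm hq hk, sq_nonneg ‖T k‖, norm_nonneg (R k)]

theorem transmission_sub_one_add_reflection_isLittleO (h : IsScatteringData c U V T R)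
    (hq : Integrable (qfun c)) :
    (fun k ↦ T k - (1 + R k)) =o[𝓝[≠] 0] fun k : ℝ ↦ (k : ℂ) := by
  have hU := IsJostPlus.isLittleO_apply_zero_sub_one
    (fun k : ℝ ↦ h.plus k (Complex.ofReal_im k).ge) hq
  have hV := IsJostPlus.isLittleO_apply_zero_sub_one (U := fun k x ↦ V k (-x))
    (fun k : ℝ ↦ (h.minus k (Complex.ofReal_im k).ge).comp_neg) (integrable_qfun_comp_neg hq)
  simp only [neg_zero] at hV
  have hV' : (fun k : ℝ ↦ conj (V k 0 - 1)) =o[𝓝[≠] 0] fun k : ℝ ↦ (k : ℂ) :=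
    hV.norm_left.congr_left (fun _ ↦ (RCLike.norm_conj _).symm) |>.of_norm_left
  have hR := (h.isBigO_reflection hq).mul_isLittleO hV
  have hT := (h.isBigO_transmission hq).mul_isLittleO hU
  simp only [one_mul] at hR hT
  refine ((hR.add hV').sub hT).congr' ?_ EventuallyEq.rfl
  filter_upwards [self_mem_nhdsWithin] with k hk
  have hconn := h.connection k hk 0
  field_simp [h.transmission_ne_zero hk] at hconn
  rw [map_sub, map_one]
  linear_combination -hconn

end IsScatteringData

variable {c₁ c₂ : ℝ → ℝ} {U₁ U₂ V₁ V₂ : ℂ → ℝ → ℂ} {T₁ T₂ R₁ R₂ : ℝ → ℂ}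

theorem normalizedWronskian_div_eq (h₁ : IsScatteringData c₁ U₁ U₂ T₁ R₁)
    (h₂ : IsScatteringData c₂ V₁ V₂ T₂ R₂) {k : ℝ} (hk : k ≠ 0) :
    normalizedWronskian U₁ U₂ k / normalizedWronskian V₁ V₂ k = T₂ k / T₁ k := by
  rw [h₁.normalizedWronskian_eq hk, h₂.normalizedWronskian_eq hk, one_div, one_div,
    inv_div_inv]

theorem norm_normalizedWronskian_div (h₁ : IsScatteringData c₁ U₁ U₂ T₁ R₁)
    (h₂ : IsScatteringData c₂ V₁ V₂ T₂ R₂) (hq₁ : Integrable (qfun c₁))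
    (hq₂ : Integrable (qfun c₂)) (hR : ∀ k ≠ 0, ‖R₁ k‖ = ‖R₂ k‖) (k : ℝ) :
    ‖normalizedWronskian U₁ U₂ k / normalizedWronskian V₁ V₂ k‖ = 1 := by
  rcases eq_or_ne k 0 with rfl | hk
  · simp
  have hT : ‖T₂ k‖ = ‖T₁ k‖ := by
    refine (sq_eq_sq₀ (norm_nonneg _) (norm_nonneg _)).1 ?_
    have h := h₁.sq_norm_add_sq_norm hq₁ hk
    rw [hR k hk] at h
    linarith [h₂.sq_norm_add_sq_norm hq₂ hk]
  rw [normalizedWronskian_div_eq h₁ h₂ hk, norm_div, hT,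
    div_self (norm_ne_zero_iff.2 (h₁.transmission_ne_zero hk))]

theorem hasDerivAt_normalizedWronskian_div (h₁ : IsScatteringData c₁ U₁ U₂ T₁ R₁)
    (h₂ : IsScatteringData c₂ V₁ V₂ T₂ R₂) (hc₁ : ∀ᵐ x, 0 < c₁ x) (hq₁ : Integrable (qfun c₁))
    (hq₂ : Integrable (qfun c₂)) (hR : ∀ k ≠ 0, R₁ k = R₂ k) :
    HasDerivAt (fun k : ℝ ↦ normalizedWronskian U₁ U₂ k / normalizedWronskian V₁ V₂ k) 0 0 := by
  have hF : (fun k : ℝ ↦ normalizedWronskian U₁ U₂ k) =O[𝓝[≠] 0] fun _ ↦ (1 : ℂ) := by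
    have hcont : Continuous fun k : ℝ ↦ normalizedWronskian U₁ U₂ k :=
      (h₁.isZeroFreeExpType hc₁ hq₁).continuousOn.comp_continuous Complex.continuous_ofReal
        fun k ↦ (Complex.ofReal_im k).ge
    exact ((hcont.tendsto 0).mono_left nhdsWithin_le_nhds).isBigO_one ℂ
  have hT : (fun k ↦ T₂ k - T₁ k) =o[𝓝[≠] 0] fun k : ℝ ↦ (k : ℂ) := by
    refine ((h₂.transmission_sub_one_add_reflection_isLittleO hq₂).sub
      (h₁.transmission_sub_one_add_reflection_isLittleO hq₁)).congr' ?_ EventuallyEq.rfl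
    filter_upwards [self_mem_nhdsWithin] with k hk
    rw [hR k hk, sub_sub_sub_cancel_right]
  rw [← hasDerivWithinAt_univ, ← hasDerivWithinAt_sdiff_singleton, ← Set.compl_eq_univ_sdiff,
    hasDerivWithinAt_iff_isLittleO]
  refine ((hF.mul_isLittleO hT).congr' ?_ (Eventually.of_forall fun k ↦ one_mul _)).trans_isBigO ?_
  · filter_upwards [self_mem_nhdsWithin] with k hk
    have hT₁ := h₁.transmission_ne_zero hk
    rw [normalizedWronskian_div_eq h₁ h₂ hk, h₁.normalizedWronskian_eq hk]
    simp only [Complex.ofReal_zero, normalizedWronskian_zero, div_one, smul_zero, sub_zero]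
    field_simp
  · exact Asymptotics.IsBigO.of_bound 1 (Eventually.of_forall fun k ↦ by simp)

theorem reflection_determines_transmission_general (h₁ : IsScatteringData c₁ U₁ U₂ T₁ R₁)
    (h₂ : IsScatteringData c₂ V₁ V₂ T₂ R₂) (hc₁ : ∀ᵐ x, 0 < c₁ x) (hc₂ : ∀ᵐ x, 0 < c₂ x)
    (hq₁ : Integrable (qfun c₁)) (hq₂ : Integrable (qfun c₂)) (hR : ∀ k ≠ 0, R₁ k = R₂ k) :
    ∀ k ≠ 0, T₁ k = T₂ k := by
  intro k hk
  have hone := ((h₁.isZeroFreeExpType hc₁ hq₁).div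
    (h₂.isZeroFreeExpType hc₂ hq₂)).eq_one_of_unimodular_of_hasDerivAt_zero
      (norm_normalizedWronskian_div h₁ h₂ hq₁ hq₂ fun k hk ↦ congrArg norm (hR k hk)) (by simp)
      (hasDerivAt_normalizedWronskian_div h₁ h₂ hc₁ hq₁ hq₂ hR) k
  rw [normalizedWronskian_div_eq h₁ h₂ hk] at hone
  exact ((div_eq_one_iff_eq (h₁.transmission_ne_zero hk)).1 hone).symm

end Scattering

section Hypotheses

variable {c : ℝ → ℝ}

theorem HypH1.ae_pos (h : HypH1 c) : ∀ᵐ x, 0 < c x := by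
  obtain ⟨c₀, hc₀, cM, -, hb⟩ := h
  exact hb.mono fun x hx ↦ hc₀.trans hx.1

theorem HypH2.integrable_sub_one (hm : Measurable c) (h : HypH2 c) :
    Integrable fun x ↦ c x - 1 := by
  obtain ⟨C, -, δ, hδ, hdecay⟩ := h
  have hint : Integrable fun x : ℝ ↦ C * (1 + x ^ 2) ^ (-(1 + δ) / 2) := by
    simpa using (integrable_rpow_neg_one_add_norm_sq (E := ℝ) (μ := volume) (r := 1 + δ)
      (by simp [hδ])).const_mul C
  exact hint.mono' (hm.sub_const 1).aestronglyMeasurable hdecay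

theorem integrable_qfun (hm : Measurable c) (h₁ : HypH1 c) (h₂ : HypH2 c) :
    Integrable (qfun c) := by
  obtain ⟨c₀, hc₀, cM, -, hb⟩ := h₁
  have hq : qfun c =ᵐ[volume] fun x ↦ (1 / c x + 1 / c x ^ 2) * (c x - 1) := by
    filter_upwards [hb] with x hx
    have hcx : c x ≠ 0 := (hc₀.trans hx.1).ne'
    rw [qfun]
    field_simp
    ring
  refine ((h₂.integrable_sub_one hm).bdd_mul (by fun_prop) (c := 1 / c₀ + 1 / c₀ ^ 2) ?_).congr
    hq.symm
  filter_upwards [hb] with x hx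
  have hcx : 0 < c x := hc₀.trans hx.1
  rw [Real.norm_eq_abs, abs_of_pos (by positivity)]
  gcongr <;> exact hx.1.le

end Hypotheses

/-- The reflection coefficient uniquely determines the transmission coefficient. -/
theorem reflection_determines_transmission
    (c₁ c₂ : ℝ → ℝ) (hm₁ : Measurable c₁) (hm₂ : Measurable c₂)
    (h1₁ : HypH1 c₁) (h2₁ : HypH2 c₁) (h1₂ : HypH1 c₂) (h2₂ : HypH2 c₂)
    (U₁ U₂ V₁ V₂ : ℂ → ℝ → ℂ)
    (hU₁ : ∀ k : ℂ, 0 ≤ k.im → IsJostPlus c₁ k (U₁ k))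
    (hU₂ : ∀ k : ℂ, 0 ≤ k.im → IsJostMinus c₁ k (U₂ k))
    (hV₁ : ∀ k : ℂ, 0 ≤ k.im → IsJostPlus c₂ k (V₁ k))
    (hV₂ : ∀ k : ℂ, 0 ≤ k.im → IsJostMinus c₂ k (V₂ k))
    (hregU₁ : JostFamilyRegular U₁) (hregU₂ : JostFamilyRegular U₂)
    (hregV₁ : JostFamilyRegular V₁) (hregV₂ : JostFamilyRegular V₂)
    (T₁ T₂ R₂₁ R₂₂ : ℝ → ℂ)
    (hT₁ : ∀ k : ℝ, k ≠ 0 → T₁ k ≠ 0) (hT₂ : ∀ k : ℝ, k ≠ 0 → T₂ k ≠ 0)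
    (hW₁ : ∀ k : ℝ, k ≠ 0 → ∀ x : ℝ,
      T₁ k * (deriv (U₁ (k : ℂ)) x * U₂ (k : ℂ) x -
        U₁ (k : ℂ) x * deriv (U₂ (k : ℂ)) x) = 2 * Complex.I * (k : ℂ))
    (hW₂ : ∀ k : ℝ, k ≠ 0 → ∀ x : ℝ,
      T₂ k * (deriv (V₁ (k : ℂ)) x * V₂ (k : ℂ) x -
        V₁ (k : ℂ) x * deriv (V₂ (k : ℂ)) x) = 2 * Complex.I * (k : ℂ))
    (hrel₁ : ∀ k : ℝ, k ≠ 0 → ∀ x : ℝ,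
      U₁ (k : ℂ) x = (R₂₁ k / T₁ k) * U₂ (k : ℂ) x +
        (1 / T₁ k) * (starRingEnd ℂ) (U₂ (k : ℂ) x))
    (hrel₂ : ∀ k : ℝ, k ≠ 0 → ∀ x : ℝ,
      V₁ (k : ℂ) x = (R₂₂ k / T₂ k) * V₂ (k : ℂ) x +
        (1 / T₂ k) * (starRingEnd ℂ) (V₂ (k : ℂ) x))
    (hR : ∀ k : ℝ, k ≠ 0 → R₂₁ k = R₂₂ k) :
    ∀ k : ℝ, k ≠ 0 → T₁ k = T₂ k :=
  reflection_determines_transmission_general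
    ⟨hU₁, hU₂, hregU₁, hregU₂, hW₁, hrel₁⟩ ⟨hV₁, hV₂, hregV₁, hregV₂, hW₂, hrel₂⟩
    h1₁.ae_pos h1₂.ae_pos (integrable_qfun hm₁ h1₁ h2₁) (integrable_qfun hm₂ h1₂ h2₂) hR
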